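/- Let 0 < q < 1 (real) and m ≥ 1. Then □(q)^{4m²} = (2^{m(2m−1)} / Π_{i=1}^{2m−1} i!) · det_{1≤i,j≤m}( t_{i+j−1} + 4·(−1)^{i+j} · Σ_{k=1}^∞ q^k k^{2i+2j−3}/(1 + (−q)^k) ), where each inner series converges absolutely (note 1 + (−q)^k ≥ 1 − q > 0). -/

import Mathlib

/-- The generating function `□(q) = Σ_{n∈ℤ} q^{n²}` for sums of squares. -/
noncomputable def sqGen (q : ℝ) : ℝ := ∑' n : ℤ, q ^ (n.natAbs ^ 2)
/-- The tangent numbers `t_n = (4^n − 1)|B_{2n}|/n`, so that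
`tan(x/2) = Σ_{n≥1} t_n x^{2n−1}/(2n−1)!`. -/
noncomputable def tangentNum (n : ℕ) : ℝ :=
  ((4 : ℝ) ^ n - 1) * |((bernoulli (2 * n) : ℚ) : ℝ)| / n

noncomputable def hc (up d dn : ℕ → ℝ) : ℕ → ℕ → ℝ
  | 0, k => if k = 0 then 1 else 0
  | n + 1, 0 => dn 0 * hc up d dn n 1 + d 0 * hc up d dn n 0
  | n + 1, k + 1 => dn (k + 1) * hc up d dn n (k + 2) + d (k + 1) * hc up d dn n (k + 1)
      + up k * hc up d dn n k

lemma hc_zero_of_lt (up d dn : ℕ → ℝ) (n : ℕ) : ∀ k, n < k → hc up d dn n k = 0 := by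
  induction n with
  | zero => intro k hk; simp [hc]; omega
  | succ n ih =>
    intro k hk
    obtain ⟨k, rfl⟩ : ∃ j, k = j + 1 := ⟨k - 1, by omega⟩
    simp [hc, ih (k + 2) (by omega), ih (k + 1) (by omega), ih k (by omega)]

lemma hc_diag (up d dn : ℕ → ℝ) (n : ℕ) :
    hc up d dn n n = ∏ k ∈ Finset.range n, up k := by
  induction n with
  | zero => simp [hc]
  | succ n ih =>
    rw [Finset.prod_range_succ, ← ih, hc, hc_zero_of_lt _ _ _ n (n + 2) (by omega),
      hc_zero_of_lt _ _ _ n (n + 1) (by omega)]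
    ring

lemma hc_symm_aux (up d dn w : ℕ → ℝ) (hw : ∀ k, w (k + 1) * up k = w k * dn k) (i j N : ℕ) :
    ∑ k ∈ Finset.range (N + 1), w k * (hc up d dn (i + 1) k * hc up d dn j k
        - hc up d dn i k * hc up d dn (j + 1) k) =
      w N * dn N * (hc up d dn i (N + 1) * hc up d dn j N
        - hc up d dn i N * hc up d dn j (N + 1)) := by
  induction N with
  | zero => simp [hc]; ring
  | succ N ih =>
    rw [Finset.sum_range_succ, ih, ← hw N]
    simp only [hc]
    ring

lemma hc_symm (up d dn w : ℕ → ℝ) (hw : ∀ k, w (k + 1) * up k = w k * dn k) (i j N : ℕ)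
    (hi : i < N + 1) (hj : j < N + 1) :
    ∑ k ∈ Finset.range (N + 1), w k * (hc up d dn (i + 1) k * hc up d dn j k) =
    ∑ k ∈ Finset.range (N + 1), w k * (hc up d dn i k * hc up d dn (j + 1) k) := by
  have := hc_symm_aux up d dn w hw i j N
  rw [hc_zero_of_lt _ _ _ i (N + 1) hi, hc_zero_of_lt _ _ _ j (N + 1) hj] at this
  simp only [mul_sub, Finset.sum_sub_distrib] at this
  linarith

lemma hc_gram (up d dn w : ℕ → ℝ) (hw : ∀ k, w (k + 1) * up k = w k * dn k) (hw0 : w 0 = 1)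
    (N j : ℕ) : ∀ i, i + j < N + 1 →
    ∑ k ∈ Finset.range (N + 1), w k * (hc up d dn i k * hc up d dn j k) = hc up d dn (i + j) 0 := by
  induction j with
  | zero =>
    intro i hi
    rw [Finset.sum_eq_single 0]
    · simp [hc, hw0]
    · intro b _ hb; simp [hc, hb]
    · simp
  | succ j ih =>
    intro i hi
    rw [← hc_symm up d dn w hw i j N (by omega) (by omega), ih (i + 1) (by omega)]
    congr 1; omega

lemma hc_det (up d dn w : ℕ → ℝ) (hw : ∀ k, w (k + 1) * up k = w k * dn k) (hw0 : w 0 = 1)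
    (m : ℕ) : Matrix.det (Matrix.of fun i j : Fin m => hc up d dn ((i : ℕ) + (j : ℕ)) 0) =
      ∏ i ∈ Finset.range m, w i * (∏ k ∈ Finset.range i, up k) ^ 2 := by
  set A : Matrix (Fin m) (Fin m) ℝ := Matrix.of fun i k => hc up d dn i k with hA
  have hfac : (Matrix.of fun i j : Fin m => hc up d dn ((i : ℕ) + (j : ℕ)) 0) =
      A * Matrix.diagonal (fun k : Fin m => w k) * A.transpose := by
    ext i j
    rw [Matrix.mul_apply]
    simp only [Matrix.mul_diagonal, Matrix.transpose_apply, hA, Matrix.of_apply]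
    rw [← hc_gram up d dn w hw hw0 (2 * m) j i (by omega)]
    rw [← Finset.sum_subset (Finset.range_mono (show m ≤ 2 * m + 1 by omega))]
    · rw [Finset.sum_range]
      exact Finset.sum_congr rfl fun k _ => by ring
    · intro k _ hk
      rw [hc_zero_of_lt up d dn i k (by simp at hk; omega)]
      ring
  have hdA : A.det = ∏ i : Fin m, hc up d dn i i := by
    apply Matrix.det_of_isLowerTriangular
    intro i j hij
    exact hc_zero_of_lt up d dn i j (by simpa using hij)
  rw [hfac, Matrix.det_mul, Matrix.det_mul, Matrix.det_transpose, Matrix.det_diagonal, hdA,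
    Finset.prod_range, ← Finset.prod_mul_distrib, ← Finset.prod_mul_distrib]
  exact Finset.prod_congr rfl fun i _ => by rw [hc_diag]; ring

/-- tridiagonal coefficients attached to the elliptic-type equation -/
noncomputable def cc (al B : ℝ) : ℕ → ℕ → ℝ :=
  hc (fun k => (2 * k + 1) * (2 * k + 2) / 4) (fun k => (2 * k + 1) ^ 2 * B)
    (fun k => (2 * k + 3) * (2 * k + 2) * al)

lemma prod_up (i : ℕ) : ∏ k ∈ Finset.range i, ((2 * (k : ℝ) + 1) * (2 * k + 2) / 4) =
    (Nat.factorial (2 * i) : ℝ) / 4 ^ i := by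
  induction i with
  | zero => simp
  | succ i ih =>
    rw [Finset.prod_range_succ, ih, show 2 * (i + 1) = 2 * i + 1 + 1 by ring,
      Nat.factorial_succ, Nat.factorial_succ]
    push_cast
    field_simp
    ring

lemma cc_det (al B : ℝ) (m : ℕ) :
    Matrix.det (Matrix.of fun i j : Fin m => cc al B ((i : ℕ) + (j : ℕ)) 0) =
      ∏ i ∈ Finset.range m,
        (al / 4) ^ i * ((Nat.factorial (2 * i) : ℝ) * (Nat.factorial (2 * i + 1) : ℝ)) := by
  unfold cc
  rw [hc_det _ _ _ (fun k => (4 * al) ^ k * (2 * k + 1))]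
  · refine Finset.prod_congr rfl fun i _ => ?_
    rw [prod_up, Nat.factorial_succ]
    push_cast
    rw [mul_pow, div_pow, div_pow, ← pow_mul]
    rw [show (4 : ℝ) ^ (i * 2) = 4 ^ i * 4 ^ i by ring]
    field_simp
  · intro k
    push_cast
    rw [pow_succ]
    ring
  · simp

lemma prod_fact (m : ℕ) : ∏ i ∈ Finset.range m,
      ((Nat.factorial (2 * i) : ℝ) * (Nat.factorial (2 * i + 1) : ℝ)) =
    ∏ i ∈ Finset.Icc 1 (2 * m - 1), (Nat.factorial i : ℝ) := by
  have h : ∀ m : ℕ, ∏ i ∈ Finset.range m,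
      ((Nat.factorial (2 * i) : ℝ) * (Nat.factorial (2 * i + 1) : ℝ)) =
      ∏ i ∈ Finset.range (2 * m), (Nat.factorial i : ℝ) := by
    intro m
    induction m with
    | zero => simp
    | succ m ih =>
      rw [Finset.prod_range_succ, ih, show 2 * (m + 1) = 2 * m + 1 + 1 by ring,
        Finset.prod_range_succ, Finset.prod_range_succ]
      ring
  rw [h]
  rcases Nat.eq_zero_or_pos m with rfl | hm
  · simp
  · obtain ⟨j, hj⟩ : ∃ j, 2 * m = j + 1 := ⟨2 * m - 1, by omega⟩
    rw [hj, Finset.prod_range_succ', Nat.add_sub_cancel]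
    simp only [Nat.factorial_zero, Nat.cast_one, mul_one]
    rw [Finset.range_eq_Ico, Finset.prod_Ico_add' (fun i => (Nat.factorial i : ℝ)) 0 j 1]
    rfl

lemma th_pow (th : ℝ) (m : ℕ) : (th ^ 4 / 2) ^ m * ∏ i ∈ Finset.range m, ((th ^ 4 / 2) ^ 2 / 4) ^ i =
    th ^ (4 * m ^ 2) / 2 ^ (m * (2 * m - 1)) := by
  induction m with
  | zero => simp
  | succ m ih =>
    rw [Finset.prod_range_succ, pow_succ]
    have e : 4 * (m + 1) ^ 2 = 4 * m ^ 2 + (8 * m + 4) := by ring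
    have e2 : (m + 1) * (2 * (m + 1) - 1) = m * (2 * m - 1) + (4 * m + 1) := by
      rcases m with _ | m
      · simp
      · rw [show 2 * (m + 1 + 1) - 1 = 2 * m + 3 by omega,
          show 2 * (m + 1) - 1 = 2 * m + 1 by omega]
        ring
    have e3 : (th ^ 4 / 2 * ((th ^ 4 / 2) ^ 2 / 4) ^ m) = th ^ (8 * m + 4) / 2 ^ (4 * m + 1) := by
      rw [show (th ^ 4 / 2) ^ 2 / 4 = th ^ 8 / 2 ^ 4 by ring, div_pow, ← pow_mul, ← pow_mul,
        pow_add, pow_add]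
      field_simp
    rw [e, e2, pow_add th (4 * m ^ 2), pow_add (2 : ℝ) (m * (2 * m - 1))]
    rw [mul_div_mul_comm, ← e3, ← ih]
    ring

/-- final algebraic evaluation -/
lemma hankel_final (th B : ℝ) (m : ℕ) (a : ℕ → ℝ)
    (ha : ∀ n, a n = (-1) ^ n * (th ^ 4 / 2 * cc ((th ^ 4 / 2) ^ 2) B n 0)) :
    th ^ (4 * m ^ 2) = ((2 : ℝ) ^ (m * (2 * m - 1)) /
      ∏ i ∈ Finset.Icc 1 (2 * m - 1), (Nat.factorial i : ℝ)) *
        Matrix.det (Matrix.of fun i j : Fin m => a ((i : ℕ) + (j : ℕ))) := by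
  have h1 : (Matrix.of fun i j : Fin m => a ((i : ℕ) + (j : ℕ))) =
      Matrix.diagonal (fun i : Fin m => (-1 : ℝ) ^ (i : ℕ)) *
      ((th ^ 4 / 2) • (Matrix.of fun i j : Fin m => cc ((th ^ 4 / 2) ^ 2) B ((i : ℕ) + (j : ℕ)) 0))
      * Matrix.diagonal (fun i : Fin m => (-1 : ℝ) ^ (i : ℕ)) := by
    ext i j
    simp only [Matrix.mul_diagonal, Matrix.diagonal_mul, Matrix.of_apply, Matrix.smul_apply, ha,
      smul_eq_mul, pow_add]
    ring
  have h2 : (∏ i : Fin m, (-1 : ℝ) ^ (i : ℕ)) * ∏ i : Fin m, (-1 : ℝ) ^ (i : ℕ) = 1 := by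
    rw [← Finset.prod_mul_distrib]
    exact Finset.prod_eq_one fun i _ => by rw [← mul_pow]; simp
  rw [h1, Matrix.det_mul, Matrix.det_mul, Matrix.det_diagonal, Matrix.det_smul, cc_det,
    Finset.prod_mul_distrib, prod_fact]
  have h3 : (∏ i ∈ Finset.Icc 1 (2 * m - 1), (Nat.factorial i : ℝ)) ≠ 0 :=
    Finset.prod_ne_zero_iff.2 fun i _ => by positivity
  set P := ∏ i ∈ Finset.Icc 1 (2 * m - 1), (Nat.factorial i : ℝ)
  set S := ∏ i : Fin m, (-1 : ℝ) ^ (i : ℕ)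
  have h4 := th_pow th m
  calc th ^ (4 * m ^ 2) = (2 ^ (m * (2 * m - 1)) / P) * P *
        (th ^ (4 * m ^ 2) / 2 ^ (m * (2 * m - 1))) := by field_simp
    _ = _ := by
      rw [← h4, Fintype.card_fin]
      linear_combination (-(2 ^ (m * (2 * m - 1)) / P * P * ((th ^ 4 / 2) ^ m * ∏ i ∈ Finset.range m, ((th ^ 4 / 2) ^ 2 / 4) ^ i))) * h2

/-- reindexing `(n, a) ↦ (a, n - a)` -/
def convEquiv : ℤ × ℤ ≃ ℤ × ℤ where
  toFun x := (x.2, x.1 - x.2)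
  invFun y := (y.1 + y.2, y.1)
  left_inv x := by ext <;> simp
  right_inv y := by ext <;> simp

lemma conv_hasSum (f g : ℤ → ℝ) (z : ℝ) (hz : z ≠ 0) (hf : Summable fun n => f n * z ^ n)
    (hg : Summable fun n => g n * z ^ n) :
    (∀ n : ℤ, Summable fun a : ℤ => f a * g (n - a)) ∧
    HasSum (fun n : ℤ => (∑' a : ℤ, f a * g (n - a)) * z ^ n)
      ((∑' n : ℤ, f n * z ^ n) * (∑' n : ℤ, g n * z ^ n)) := by
  have h1 : Summable fun x : ℤ × ℤ => (f x.1 * z ^ x.1) * (g x.2 * z ^ x.2) :=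
    summable_mul_of_summable_norm hf.norm hg.norm
  have h2 := hf.hasSum.mul hg.hasSum h1
  have h3 := (convEquiv.hasSum_iff).2 h2
  have h4 : ((fun x : ℤ × ℤ => (f x.1 * z ^ x.1) * (g x.2 * z ^ x.2)) ∘ convEquiv) =
      fun x : ℤ × ℤ => (f x.2 * g (x.1 - x.2)) * z ^ x.1 := by
    funext x
    have : z ^ x.1 = z ^ x.2 * z ^ (x.1 - x.2) := by
      rw [← zpow_add₀ hz]; congr 1; ring
    simp only [Function.comp, convEquiv, Equiv.coe_fn_mk, this]
    ring
  rw [h4] at h3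
  have h5 : ∀ n : ℤ, Summable fun a : ℤ => f a * g (n - a) := by
    intro n
    have := h3.summable.prod_factor n
    exact (summable_mul_right_iff (zpow_ne_zero n hz)).1 this
  refine ⟨h5, h3.prod_fiberwise fun n => ?_⟩
  exact (h5 n).hasSum.mul_right _

/-- `u p n = 1 / (1 + p^n)` -/
noncomputable def uu (p : ℝ) (n : ℤ) : ℝ := 1 / (1 + p ^ n)

lemma hs_congr {ι : Type*} {f g : ι → ℝ} {a b : ℝ} (h : HasSum f a) (hfg : ∀ x, g x = f x)
    (hab : b = a) : HasSum g b := by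
  rw [hab, show g = f from funext hfg]; exact h

section
variable {p : ℝ}

lemma zpow_abs_ne (hp1 : |p| < 1) {n : ℤ} (hn : n ≠ 0) : |p ^ n| ≠ 1 := by
  rw [abs_zpow]
  intro h
  rcases (zpow_eq_one_iff_of_ne_zero₀ hn).1 h with h | h
  · linarith
  · have := abs_nonneg p
    linarith [h.1]

lemma one_add_ne (_hp0 : p ≠ 0) (hp1 : |p| < 1) (n : ℤ) : 1 + p ^ n ≠ 0 := by
  rcases eq_or_ne n 0 with rfl | hn
  · norm_num
  · intro h
    apply zpow_abs_ne hp1 hn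
    rw [show p ^ n = -1 by linarith]; simp

lemma one_sub_ne (_hp0 : p ≠ 0) (hp1 : |p| < 1) {n : ℤ} (hn : n ≠ 0) : 1 - p ^ n ≠ 0 := by
  intro h
  apply zpow_abs_ne hp1 hn
  rw [show p ^ n = 1 by linarith]; simp

lemma uu_neg (hp0 : p ≠ 0) (hp1 : |p| < 1) (n : ℤ) : uu p (-n) = 1 - uu p n := by
  have h := one_add_ne hp0 hp1 n
  have h2 := zpow_ne_zero n hp0
  have h3 : p ^ n + 1 ≠ 0 := by rwa [add_comm]
  unfold uu
  rw [zpow_neg]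
  field_simp
  ring

lemma uu_neg' (hp0 : p ≠ 0) (hp1 : |p| < 1) (n : ℤ) : uu p (-n) = p ^ n * uu p n := by
  rw [uu_neg hp0 hp1]
  have h := one_add_ne hp0 hp1 n
  unfold uu
  field_simp
  ring

lemma uu_zero : uu p 0 = 1 / 2 := by norm_num [uu]

lemma uu_bound (hp1 : |p| < 1) (k : ℕ) : |uu p k| ≤ 1 / (1 - |p|) := by
  unfold uu
  rw [abs_div, abs_one]
  have h0 := abs_nonneg p
  apply one_div_le_one_div_of_le (by linarith)
  rw [zpow_natCast]
  rcases k with _ | k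
  · norm_num; linarith
  · have h1 : |p ^ (k + 1)| ≤ |p| := by
      rw [abs_pow]; exact pow_le_of_le_one h0 hp1.le (by omega)
    have h2 : 1 - |p ^ (k + 1)| ≤ |1 + p ^ (k + 1)| := by
      have := abs_sub_abs_le_abs_sub 1 (-p ^ (k + 1))
      simpa using this
    linarith

lemma uu_bound_neg (hp0 : p ≠ 0) (hp1 : |p| < 1) (k : ℕ) :
    |uu p (-(k : ℤ))| ≤ |p| ^ k * (1 / (1 - |p|)) := by
  rw [uu_neg' hp0 hp1, abs_mul, zpow_natCast, abs_pow]
  exact mul_le_mul_of_nonneg_left (uu_bound hp1 k) (by positivity)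

lemma uu_summable (hp0 : p ≠ 0) (hp1 : |p| < 1) (j : ℕ) {z : ℝ} (hz1 : |p| < |z|) (hz2 : |z| < 1) :
    Summable fun n : ℤ => ((n : ℝ) ^ j * uu p n) * z ^ n := by
  have hp : 0 < |p| := abs_pos.2 hp0
  have hz : 0 < |z| := hp.trans hz1
  have hz0 : z ≠ 0 := abs_pos.1 hz
  apply Summable.of_nat_of_neg
  · have h := (summable_pow_mul_geometric_of_norm_lt_one (R := ℝ) j (r := |z|)
      (by simpa using hz2)).mul_left (1 / (1 - |p|))
    refine Summable.of_norm_bounded h fun k => ?_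
    rw [Real.norm_eq_abs, abs_mul, abs_mul, zpow_natCast, abs_pow, abs_pow]
    simp only [Int.cast_natCast, Nat.abs_cast]
    calc (k : ℝ) ^ j * |uu p k| * |z| ^ k ≤ (k : ℝ) ^ j * (1 / (1 - |p|)) * |z| ^ k := by
          have := uu_bound hp1 k
          gcongr
      _ = _ := by ring
  · have hr : |p| / |z| < 1 := by rwa [div_lt_one hz]
    have h := (summable_pow_mul_geometric_of_norm_lt_one (R := ℝ) j (r := |p| / |z|)
      (by rw [Real.norm_eq_abs, abs_of_nonneg (by positivity)]; exact hr)).mul_left (1 / (1 - |p|))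
    refine Summable.of_norm_bounded h fun k => ?_
    rw [Real.norm_eq_abs, abs_mul, abs_mul, zpow_neg, zpow_natCast, abs_pow, abs_inv, abs_pow]
    simp only [Int.cast_neg, Int.cast_natCast, abs_neg, Nat.abs_cast]
    calc (k : ℝ) ^ j * |uu p (-(k : ℤ))| * (|z| ^ k)⁻¹
        ≤ (k : ℝ) ^ j * (|p| ^ k * (1 / (1 - |p|))) * (|z| ^ k)⁻¹ := by
          have := uu_bound_neg hp0 hp1 k
          gcongr
      _ = _ := by rw [div_pow]; ring

/-- `u` minus the Heaviside function -/
noncomputable def ww (p : ℝ) (n : ℤ) : ℝ := uu p n - if 0 ≤ n then 1 else 0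

lemma ww_summable (hp0 : p ≠ 0) (hp1 : |p| < 1) (j : ℕ) :
    Summable fun n : ℤ => (n : ℝ) ^ j * ww p n := by
  have h := (summable_pow_mul_geometric_of_norm_lt_one (R := ℝ) j (r := |p|)
      (by simpa using hp1)).mul_left (1 / (1 - |p|))
  apply Summable.of_nat_of_neg
  · refine Summable.of_norm_bounded h fun k => ?_
    have : ww p k = - uu p (-(k : ℤ)) := by
      rw [uu_neg hp0 hp1, ww]; simp
    rw [this, Real.norm_eq_abs, abs_mul, abs_neg, abs_pow]
    simp only [Int.cast_natCast, Nat.abs_cast]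
    have := uu_bound_neg hp0 hp1 k
    calc (k : ℝ) ^ j * |uu p (-(k : ℤ))| ≤ (k : ℝ) ^ j * (|p| ^ k * (1 / (1 - |p|))) := by gcongr
      _ = _ := by ring
  · rw [← summable_nat_add_iff 1]
    rw [← summable_nat_add_iff 1] at h
    refine Summable.of_norm_bounded h fun k => ?_
    have : ww p (-((k + 1 : ℕ) : ℤ)) = uu p (-((k + 1 : ℕ) : ℤ)) := by
      rw [ww, if_neg (by omega), sub_zero]
    rw [this, Real.norm_eq_abs, abs_mul, abs_pow]
    simp only [Int.cast_neg, Int.cast_natCast, abs_neg, Nat.abs_cast]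
    have := uu_bound_neg hp0 hp1 (k + 1)
    calc ((k + 1 : ℕ) : ℝ) ^ j * |uu p (-((k + 1 : ℕ) : ℤ))|
        ≤ ((k + 1 : ℕ) : ℝ) ^ j * (|p| ^ (k + 1) * (1 / (1 - |p|))) := by gcongr
      _ = _ := by ring

lemma hasSum_shift {f : ℤ → ℝ} {s : ℝ} (h : HasSum f s) (c : ℤ) :
    HasSum (fun a => f (a - c)) s :=
  ((Equiv.subRight c).hasSum_iff (f := f)).2 h

lemma hasSum_reflect {f : ℤ → ℝ} {s : ℝ} (h : HasSum f s) (c : ℤ) :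
    HasSum (fun a => f (c - a)) s :=
  ((Equiv.subLeft c).hasSum_iff (f := f)).2 h

/-- `v a = u a - u (a - 1)` -/
noncomputable def vv (p : ℝ) (a : ℤ) : ℝ := uu p a - uu p (a - 1)

lemma vv_eq (a : ℤ) : vv p a = ww p a - ww p (a - 1) + if a = 0 then 1 else 0 := by
  unfold vv ww
  split_ifs <;> first | omega | ring

lemma vv_hasSum (hp0 : p ≠ 0) (hp1 : |p| < 1) : HasSum (vv p) 1 := by
  have h0 : Summable (ww p) := by simpa using ww_summable hp0 hp1 0
  have h := (h0.hasSum.sub (hasSum_shift h0.hasSum 1)).add (hasSum_ite_eq (0 : ℤ) (1 : ℝ))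
  simp only [sub_self, zero_add] at h
  exact hs_congr h vv_eq rfl

lemma vv_reflect (hp0 : p ≠ 0) (hp1 : |p| < 1) (a : ℤ) : vv p (1 - a) = vv p a := by
  unfold vv
  have h1 := uu_neg hp0 hp1 (a - 1)
  have h2 := uu_neg hp0 hp1 a
  rw [show 1 - a = -(a - 1) by ring, h1, show -(a - 1) - 1 = -a by ring, h2]
  ring

lemma vv_hasSum_one (hp0 : p ≠ 0) (hp1 : |p| < 1) :
    HasSum (fun a : ℤ => (a : ℝ) * vv p a) (1 / 2) := by
  have h0 : Summable (ww p) := by simpa using ww_summable hp0 hp1 0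
  have h1 : Summable (fun a : ℤ => (a : ℝ) * ww p a) := by simpa using ww_summable hp0 hp1 1
  have hs : Summable (fun a : ℤ => (a : ℝ) * vv p a) := by
    have := ((h1.hasSum.sub (hasSum_shift h1.hasSum 1)).sub (hasSum_shift h0.hasSum 1)).summable
    refine this.congr fun a => ?_
    rw [vv_eq]
    push_cast
    split_ifs with h
    · subst h; push_cast; ring
    · ring
  have hr := hasSum_reflect hs.hasSum 1
  simp only [vv_reflect hp0 hp1] at hr
  have h2 := (vv_hasSum hp0 hp1).sub hs.hasSum
  have h3 := h2.unique (hs_congr hr (fun a => by push_cast; ring) rfl)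
  have : ∑' a : ℤ, (a : ℝ) * vv p a = 1 / 2 := by linarith
  rw [← this]; exact hs.hasSum

lemma tele0 (hp0 : p ≠ 0) (hp1 : |p| < 1) (n : ℤ) :
    HasSum (fun a : ℤ => uu p a - uu p (a - n)) n := by
  induction n with
  | zero => simp
  | succ n ih =>
    have := ih.add (hasSum_shift (vv_hasSum hp0 hp1) n)
    refine hs_congr (this) (fun a => ?_) ?_
    · simp only [vv]; rw [show a - ((n : ℤ) + 1) = a - n - 1 by ring]; ring
    · push_cast; ring
  | pred n ih =>
    have := ih.sub (hasSum_shift (vv_hasSum hp0 hp1) (-n - 1))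
    refine hs_congr (this) (fun a => ?_) ?_
    · simp only [vv]; rw [show a - (-(n : ℤ) - 1) - 1 = a - (-n) by ring]; ring
    · push_cast; ring

lemma vv_shift_one (hp0 : p ≠ 0) (hp1 : |p| < 1) (n : ℤ) :
    HasSum (fun a : ℤ => (a : ℝ) * vv p (a - n)) (1 / 2 + n) := by
  have h1 := hasSum_shift (vv_hasSum_one hp0 hp1) n
  have h2 := (hasSum_shift (vv_hasSum hp0 hp1) n).mul_left (n : ℝ)
  refine hs_congr (h1.add h2) (fun a => ?_) ?_
  · push_cast; ring
  · ring

lemma tele1 (hp0 : p ≠ 0) (hp1 : |p| < 1) (n : ℤ) :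
    HasSum (fun a : ℤ => (a : ℝ) * (uu p a - uu p (a - n))) ((n : ℝ) ^ 2 / 2) := by
  induction n with
  | zero => simp
  | succ n ih =>
    have := ih.add (vv_shift_one hp0 hp1 n)
    refine hs_congr (this) (fun a => ?_) ?_
    · simp only [vv]; rw [show a - ((n : ℤ) + 1) = a - n - 1 by ring]; ring
    · push_cast; ring
  | pred n ih =>
    have := ih.sub (vv_shift_one hp0 hp1 (-n - 1))
    refine hs_congr (this) (fun a => ?_) ?_
    · simp only [vv]; rw [show a - (-(n : ℤ) - 1) - 1 = a - (-n) by ring]; ring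
    · push_cast; ring

lemma tele_alt (hp0 : p ≠ 0) (hp1 : |p| < 1) (n : ℤ) (hn : Even n) :
    HasSum (fun a : ℤ => (-1 : ℝ) ^ a * (uu p a - uu p (a - n))) 0 := by
  have hs : Summable fun a : ℤ => (-1 : ℝ) ^ a * vv p a := by
    refine Summable.of_norm_bounded (vv_hasSum hp0 hp1).summable.norm fun a => ?_
    rw [norm_mul, norm_zpow]; simp
  obtain ⟨V, hV⟩ := hs
  have hV' : ∀ n : ℤ, HasSum (fun a : ℤ => (-1 : ℝ) ^ a * vv p (a - n)) ((-1) ^ n * V) := by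
    intro n
    refine hs_congr ((hasSum_shift hV n).mul_left ((-1 : ℝ) ^ n)) (fun a => ?_) rfl
    rw [← mul_assoc, ← zpow_add₀ (by norm_num)]; congr 2; ring
  have key : ∀ n : ℤ, HasSum (fun a : ℤ => (-1 : ℝ) ^ a * (uu p a - uu p (a - n)))
      ((1 - (-1) ^ n) / 2 * V) := by
    intro n
    induction n with
    | zero => simp
    | succ n ih =>
      have := ih.add (hV' n)
      refine hs_congr (this) (fun a => ?_) ?_
      · simp only [vv]; rw [show a - ((n : ℤ) + 1) = a - n - 1 by ring]; ring
      · rw [zpow_add₀ (by norm_num)]; norm_num; ring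
    | pred n ih =>
      have := ih.sub (hV' (-n - 1))
      refine hs_congr (this) (fun a => ?_) ?_
      · simp only [vv]; rw [show a - (-(n : ℤ) - 1) - 1 = a - (-n) by ring]; ring
      · rw [zpow_sub₀ (by norm_num)]; norm_num; ring
  have := key n
  rwa [hn.neg_one_zpow, sub_self, zero_div, zero_mul] at this

lemma uu_mul (hp0 : p ≠ 0) (hp1 : |p| < 1) {n : ℤ} (hn : n ≠ 0) (a : ℤ) :
    uu p a * uu p (n - a) = 1 / (1 - p ^ n) * (uu p a - uu p (a - n)) := by
  have h1 := one_add_ne hp0 hp1 a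
  have h2 := one_add_ne hp0 hp1 (n - a)
  have h3 := one_sub_ne hp0 hp1 hn
  have h4 : p ^ n = p ^ a * p ^ (n - a) := by rw [← zpow_add₀ hp0]; congr 1; ring
  rw [show a - n = -(n - a) by ring, uu_neg hp0 hp1]
  unfold uu
  rw [h4] at h3 ⊢
  generalize p ^ a = x at *
  generalize p ^ (n - a) = y at *
  field_simp
  ring

/-- coefficients of `h^2` -/
noncomputable def ee (p : ℝ) (n : ℤ) : ℝ := ∑' a : ℤ, uu p a * uu p (n - a)

lemma ee_eq (hp0 : p ≠ 0) (hp1 : |p| < 1) {n : ℤ} (hn : n ≠ 0) : ee p n = n / (1 - p ^ n) := by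
  unfold ee
  simp_rw [uu_mul hp0 hp1 hn]
  rw [((tele0 hp0 hp1 n).mul_left _).tsum_eq]
  ring

lemma ee_mul (hp0 : p ≠ 0) (hp1 : |p| < 1) (n a : ℤ) :
    ee p a * uu p (n - a) = uu p n * ((if a = 0 then ee p 0 else a * (1 / (1 - p ^ a) - uu p a))
      + a * (uu p a - uu p (a - n))) := by
  split_ifs with h
  · subst h; simp; ring
  · rw [ee_eq hp0 hp1 h]
    have h1 := one_sub_ne hp0 hp1 h
    have h2 := one_add_ne hp0 hp1 (n - a)
    have h3 := one_add_ne hp0 hp1 n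
    have h4 : p ^ n = p ^ a * p ^ (n - a) := by rw [← zpow_add₀ hp0]; congr 1; ring
    rw [show a - n = -(n - a) by ring, uu_neg hp0 hp1]
    unfold uu
    rw [h4] at h3 ⊢
    generalize p ^ a = x at *
    generalize p ^ (n - a) = y at *
    field_simp
    ring

/-- The cubic identity for `h(z) = Σ z^n / (1 + p^n)`. -/
lemma h_cubic (hp0 : p ≠ 0) (hp1 : |p| < 1) : ∃ b : ℝ, ∀ z : ℝ, |p| < |z| → |z| < 1 →
    (∑' n : ℤ, uu p n * z ^ n) ^ 3 =
      1 / 2 * (∑' n : ℤ, ((n : ℝ) ^ 2 * uu p n) * z ^ n) + b * ∑' n : ℤ, uu p n * z ^ n := by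
  refine ⟨∑' a : ℤ, (if a = 0 then ee p 0 else (a : ℝ) * (1 / (1 - p ^ a) - uu p a)), ?_⟩
  intro z hz1 hz2
  have hz0 : z ≠ 0 := abs_pos.1 ((abs_nonneg p).trans_lt hz1)
  have hs0 : Summable fun n : ℤ => uu p n * z ^ n := by
    simpa using uu_summable hp0 hp1 0 hz1 hz2
  have hs2 := uu_summable hp0 hp1 2 hz1 hz2
  have c1 := (conv_hasSum _ _ z hz0 hs0 hs0).2
  have hse : Summable fun n : ℤ => ee p n * z ^ n := c1.summable
  have c1' : (∑' n : ℤ, ee p n * z ^ n) = (∑' n : ℤ, uu p n * z ^ n) ^ 2 := by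
    rw [sq]; exact c1.tsum_eq
  obtain ⟨c2, c3⟩ := conv_hasSum _ _ z hz0 hse hs0
  set F : ℤ → ℝ := fun a : ℤ => (if a = 0 then ee p 0 else (a : ℝ) * (1 / (1 - p ^ a) - uu p a))
    with hF
  have hFs : Summable F := by
    have := c2 0
    simp_rw [ee_mul hp0 hp1] at this
    have h := (summable_mul_left_iff (a := uu p 0) (by rw [uu_zero]; norm_num)).1 this
    simpa [hF] using h
  have hcoef : ∀ n : ℤ, ∑' a : ℤ, ee p a * uu p (n - a) =
      1 / 2 * ((n : ℝ) ^ 2 * uu p n) + (∑' a, F a) * uu p n := by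
    intro n
    simp_rw [ee_mul hp0 hp1]
    have := (hFs.hasSum.add (tele1 hp0 hp1 n)).mul_left (uu p n)
    rw [this.tsum_eq]
    ring
  simp_rw [hcoef] at c3
  have c4 := (hs2.hasSum.mul_left (1 / 2)).add (hs0.hasSum.mul_left (∑' a, F a))
  have := c3.unique (hs_congr c4 (fun n => by ring) rfl)
  rw [c1'] at this
  rw [← this]
  ring

end

lemma lambert_swap {x ε : ℝ} (hx : |x| < 1) (hε : |ε| = 1) :
    Summable (fun m : ℕ => ε ^ (m + 1) * (x ^ (m + 1) / (1 + x ^ (m + 1)) ^ 2)) ∧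
    HasSum (fun d : ℕ => ((d : ℝ) + 1) * ((-1) ^ d * (ε * x ^ (d + 1) / (1 - ε * x ^ (d + 1)))))
      (∑' m : ℕ, ε ^ (m + 1) * (x ^ (m + 1) / (1 + x ^ (m + 1)) ^ 2)) := by
  have hx0 := abs_nonneg x
  have hxp : ∀ m : ℕ, |x ^ (m + 1)| < 1 := fun m => by
    rw [abs_pow]; exact pow_lt_one₀ hx0 hx (by omega)
  set F : ℕ × ℕ → ℝ := fun y =>
    ε ^ (y.1 + 1) * ((-1) ^ y.2 * ((y.2 : ℝ) + 1) * x ^ ((y.1 + 1) * (y.2 + 1))) with hF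
  have hs : Summable F := by
    have h1 : Summable fun m : ℕ => |x| ^ m := summable_geometric_of_lt_one hx0 hx
    have h2 : Summable fun d : ℕ => ((d : ℝ) + 1) * |x| ^ d := by
      have h3 := summable_pow_mul_geometric_of_norm_lt_one (R := ℝ) 1 (r := |x|) (by simpa using hx)
      refine (h3.add h1).congr fun d => by ring
    have h4 : Summable fun y : ℕ × ℕ => |x| ^ y.1 * (((y.2 : ℝ) + 1) * |x| ^ y.2) :=
      h1.mul_of_nonneg h2 (fun m => by positivity) (fun m => by positivity)
    refine Summable.of_norm_bounded h4 fun y => ?_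
    rw [hF, Real.norm_eq_abs]
    simp only [abs_mul, abs_pow, hε, abs_neg, abs_one, one_pow, one_mul]
    rw [abs_of_nonneg (by positivity : (0 : ℝ) ≤ (y.2 : ℝ) + 1)]
    have : |x| ^ ((y.1 + 1) * (y.2 + 1)) ≤ |x| ^ (y.1 + y.2) :=
      pow_le_pow_of_le_one hx0 hx.le (by nlinarith)
    calc ((y.2 : ℝ) + 1) * |x| ^ ((y.1 + 1) * (y.2 + 1)) ≤ ((y.2 : ℝ) + 1) * |x| ^ (y.1 + y.2) := by
          gcongr
      _ = _ := by rw [pow_add]; ring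
  have hin1 : ∀ m : ℕ, HasSum (fun d : ℕ => F (m, d))
      (ε ^ (m + 1) * (x ^ (m + 1) / (1 + x ^ (m + 1)) ^ 2)) := by
    intro m
    apply HasSum.mul_left
    have h := hasSum_coe_mul_geometric_of_norm_lt_one (r := -x ^ (m + 1)) (by simpa using hxp m)
    rw [← hasSum_nat_add_iff' 1] at h
    have h' := h.neg
    refine hs_congr h' (fun d => ?_) ?_
    · simp only
      rw [pow_mul, neg_pow (x ^ (m + 1))]
      push_cast
      ring
    · simp; ring
  have hin2 : ∀ d : ℕ, HasSum (fun m : ℕ => F (m, d))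
      (((d : ℝ) + 1) * ((-1) ^ d * (ε * x ^ (d + 1) / (1 - ε * x ^ (d + 1))))) := by
    intro d
    have hlt : |ε * x ^ (d + 1)| < 1 := by rw [abs_mul, hε, one_mul]; exact hxp d
    have h := (hasSum_geometric_of_abs_lt_one hlt).mul_left
      (((d : ℝ) + 1) * (-1) ^ d * (ε * x ^ (d + 1)))
    refine hs_congr h (fun m => ?_) ?_
    · simp only [hF]
      rw [mul_pow, ← pow_mul, show (m + 1) * (d + 1) = (d + 1) * m + (d + 1) by ring, pow_add x]
      ring
    · rw [div_eq_mul_inv]; ring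
  have h1 := hs.hasSum.prod_fiberwise hin1
  have hs2 : HasSum (F ∘ Equiv.prodComm ℕ ℕ) (∑' y, F y) :=
    ((Equiv.prodComm ℕ ℕ).hasSum_iff).2 hs.hasSum
  have h2 := hs2.prod_fiberwise (f := F ∘ Equiv.prodComm ℕ ℕ) (fun d => hin2 d)
  refine ⟨h1.summable, ?_⟩
  rw [h1.tsum_eq]; exact h2

/-- even bilateral sums -/
lemma tsum_even_int {f : ℤ → ℝ} (hf : Summable f) (he : ∀ n, f (-n) = f n) :
    (Summable fun k : ℕ => f ((k : ℤ) + 1)) ∧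
    ∑' n, f n = f 0 + 2 * ∑' k : ℕ, f ((k : ℤ) + 1) := by
  have h1 : Summable fun k : ℕ => f ((k : ℤ) + 1) :=
    hf.comp_injective (i := fun k : ℕ => (k : ℤ) + 1) (fun a b h => by simpa using h)
  refine ⟨h1, ?_⟩
  have h2 : HasSum (fun k : ℕ => f (-((k : ℤ) + 1))) (∑' k : ℕ, f ((k : ℤ) + 1)) :=
    hs_congr h1.hasSum (fun k => he _) rfl
  rw [(HasSum.of_add_one_of_neg_add_one h1.hasSum h2).tsum_eq]
  ring

/-- `S q = 2 Σ q^n / (1 + q^{2n})` -/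
noncomputable def SS (q : ℝ) : ℝ := 2 * ∑' n : ℤ, uu (q ^ 2) n * q ^ n

section
variable {q : ℝ}

lemma sq_ne (hq0 : q ≠ 0) : q ^ 2 ≠ 0 := pow_ne_zero 2 hq0

lemma sq_abs_lt (hq1 : |q| < 1) : |q ^ 2| < 1 := by
  rw [abs_pow]; exact pow_lt_one₀ (abs_nonneg q) hq1 (by norm_num)

lemma sq_abs_lt' (hq0 : q ≠ 0) (hq1 : |q| < 1) : |q ^ 2| < |q| := by
  rw [abs_pow, sq]
  have := abs_pos.2 hq0
  nlinarith

lemma SS_summable (hq0 : q ≠ 0) (hq1 : |q| < 1) : Summable fun n : ℤ => uu (q ^ 2) n * q ^ n := by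
  simpa using uu_summable (sq_ne hq0) (sq_abs_lt hq1) 0 (sq_abs_lt' hq0 hq1) hq1

lemma uu_mul_neg (hp0 : q ≠ 0) (hp1 : |q| < 1) (k : ℕ) :
    uu q ((k : ℤ) + 1) * uu q (0 - ((k : ℤ) + 1)) = q ^ (k + 1) / (1 + q ^ (k + 1)) ^ 2 := by
  have h := one_add_ne hp0 hp1 ((k : ℤ) + 1)
  rw [zero_sub, uu_neg' hp0 hp1]
  unfold uu
  have : q ^ ((k : ℤ) + 1) = q ^ (k + 1) := by exact_mod_cast zpow_natCast q (k + 1)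
  rw [this] at *
  field_simp

lemma ee_zero (hp0 : q ≠ 0) (hp1 : |q| < 1) (hs : Summable fun a : ℤ => uu q a * uu q (0 - a)) :
    ee q 0 = 1 / 4 + 2 * ∑' k : ℕ, q ^ (k + 1) / (1 + q ^ (k + 1)) ^ 2 := by
  unfold ee
  rw [(tsum_even_int hs (fun n => by simp; ring)).2]
  simp_rw [uu_mul_neg hp0 hp1]
  simp [uu_zero]
  norm_num

lemma SS_sq (hq0 : q ≠ 0) (hq1 : |q| < 1) :
    SS q ^ 2 = 1 + 8 * ∑' k : ℕ, ((k : ℝ) + 1) * (q ^ (k + 1) / (1 + (-q) ^ (k + 1))) := by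
  have hs := SS_summable hq0 hq1
  have hp0 := sq_ne hq0
  have hp1 := sq_abs_lt hq1
  obtain ⟨c1, c2⟩ := conv_hasSum _ _ q hq0 hs hs
  have c3 : SS q ^ 2 = 4 * ∑' n : ℤ, ee (q ^ 2) n * q ^ n := by
    have := c2.tsum_eq
    unfold ee SS
    rw [this]; ring
  have hse : Summable fun n : ℤ => ee (q ^ 2) n * q ^ n := c2.summable
  have heven : ∀ n : ℤ, ee (q ^ 2) (-n) * q ^ (-n) = ee (q ^ 2) n * q ^ n := by
    intro n
    rcases eq_or_ne n 0 with rfl | hn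
    · simp
    · rw [ee_eq hp0 hp1 hn, ee_eq hp0 hp1 (neg_ne_zero.2 hn)]
      have h1 := one_sub_ne hp0 hp1 hn
      have h2 := zpow_ne_zero n hq0
      have h3 : (q ^ 2) ^ n = (q ^ n) ^ 2 := by
        rw [← zpow_natCast, ← zpow_natCast, ← zpow_mul, ← zpow_mul, mul_comm]
      rw [h3] at h1
      rw [zpow_neg, zpow_neg, h3]
      clear h3
      generalize q ^ n = y at *
      have h4 : y ^ 2 - 1 ≠ 0 := by intro h; apply h1; linarith
      push_cast
      field_simp
      ring
  obtain ⟨d1, d2⟩ := tsum_even_int hse heven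
  rw [c3, d2, ee_zero hp0 hp1 (c1 0)]
  obtain ⟨l1, l2⟩ := lambert_swap (x := q ^ 2) (ε := 1) hp1 (by simp)
  simp only [one_pow, one_mul] at l1 l2
  have key := l2.add d1.hasSum
  have e : ∀ k : ℕ, ((k : ℝ) + 1) * (q ^ (k + 1) / (1 + (-q) ^ (k + 1))) =
      ((k : ℝ) + 1) * ((-1) ^ k * ((q ^ 2) ^ (k + 1) / (1 - (q ^ 2) ^ (k + 1)))) +
      ee (q ^ 2) ((k : ℤ) + 1) * q ^ ((k : ℤ) + 1) := by
    intro k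
    have h1 := one_sub_ne hp0 hp1 (n := (k : ℤ) + 1) (by omega)
    have h2 := one_add_ne hq0 hq1 ((k : ℤ) + 1)
    have h3 := one_sub_ne hq0 hq1 (n := (k : ℤ) + 1) (by omega)
    rw [ee_eq hp0 hp1 (by omega)]
    have t : ∀ r : ℝ, r ^ ((k : ℤ) + 1) = r ^ (k + 1) := fun r => by
      exact_mod_cast zpow_natCast r (k + 1)
    rw [t] at *
    rw [show (q ^ 2) ^ (k + 1) = (q ^ (k + 1)) ^ 2 by rw [← pow_mul, ← pow_mul, mul_comm]] at *
    rw [neg_pow q, pow_succ (-1 : ℝ)]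
    rw [t] at *
    generalize q ^ (k + 1) = y at *
    push_cast
    rcases neg_one_pow_eq_or ℝ k with h | h <;> rw [h]
    · rw [show 1 + 1 * -1 * y = 1 - y by ring]
      field_simp
      ring
    · rw [show 1 + -1 * -1 * y = 1 + y by ring]
      field_simp
      ring
  simp_rw [e]
  rw [key.tsum_eq]
  simp only [zpow_zero, mul_one]
  ring

lemma SS_mul_neg (hq0 : q ≠ 0) (hq1 : |q| < 1) : SS q * SS (-q) = SS (-q ^ 2) ^ 2 := by
  have hp0 := sq_ne hq0
  have hp1 := sq_abs_lt hq1
  have hs := SS_summable hq0 hq1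
  have hs' : Summable fun n : ℤ => ((-1) ^ n * uu (q ^ 2) n) * q ^ n := by
    refine Summable.of_norm_bounded hs.norm fun a => ?_
    rw [mul_assoc, norm_mul, norm_zpow]; simp
  have e1 : SS (-q) = 2 * ∑' n : ℤ, ((-1) ^ n * uu (q ^ 2) n) * q ^ n := by
    unfold SS
    congr 1
    refine tsum_congr fun n => ?_
    rw [neg_sq, neg_eq_neg_one_mul, mul_zpow]; ring
  obtain ⟨c1, c2⟩ := conv_hasSum _ _ q hq0 hs' hs
  have hodd : ∀ n : ℤ, n ≠ 0 → ∑' a : ℤ, ((-1) ^ a * uu (q ^ 2) a) * uu (q ^ 2) (n - a) = 0 := by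
    intro n hn
    rcases Int.even_or_odd n with he | ho
    · simp_rw [mul_assoc, uu_mul hp0 hp1 hn]
      have := (tele_alt hp0 hp1 n he).mul_left (1 / (1 - (q ^ 2) ^ n))
      rw [mul_zero] at this
      rw [← this.tsum_eq]
      refine tsum_congr fun a => by ring
    · have h := hasSum_reflect (c1 n).hasSum n
      have h2 := (c1 n).hasSum.neg
      have h3 := h.unique (hs_congr h2 (fun a => by
        rw [zpow_sub₀ (by norm_num), ho.neg_one_zpow, sub_sub_cancel]
        rcases Int.even_or_odd a with ha | ha
        · rw [ha.neg_one_zpow]; ring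
        · rw [ha.neg_one_zpow]; ring) rfl)
      linarith
  have c3 : SS q * SS (-q) = 4 * ∑' a : ℤ, ((-1) ^ a * uu (q ^ 2) a) * uu (q ^ 2) (0 - a) := by
    have h := c2.tsum_eq
    rw [tsum_eq_single 0 (fun n hn => by rw [hodd n hn, zero_mul])] at h
    rw [e1, SS, zpow_zero, mul_one] at *
    rw [h]; ring
  have heven : ∀ a : ℤ, ((-1 : ℝ) ^ (-a) * uu (q ^ 2) (-a)) * uu (q ^ 2) (0 - (-a)) =
      ((-1) ^ a * uu (q ^ 2) a) * uu (q ^ 2) (0 - a) := by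
    intro a
    have : (-1 : ℝ) ^ (-a) = (-1) ^ a := by
      rcases Int.even_or_odd a with ha | ha
      · rw [ha.neg_one_zpow, ha.neg.neg_one_zpow]
      · rw [ha.neg_one_zpow, ha.neg.neg_one_zpow]
    rw [this]
    simp
    ring
  obtain ⟨d1, d2⟩ := tsum_even_int (c1 0) heven
  rw [c3, d2]
  obtain ⟨l1, l2⟩ := lambert_swap (x := q ^ 2) (ε := -1) hp1 (by simp)
  have e2 : ∀ k : ℕ, ((-1 : ℝ) ^ ((k : ℤ) + 1) * uu (q ^ 2) ((k : ℤ) + 1)) *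
      uu (q ^ 2) (0 - ((k : ℤ) + 1)) =
      (-1) ^ (k + 1) * ((q ^ 2) ^ (k + 1) / (1 + (q ^ 2) ^ (k + 1)) ^ 2) := by
    intro k
    rw [mul_assoc, uu_mul_neg hp0 hp1]
    congr 1
  simp_rw [e2]
  rw [← l2.tsum_eq, SS_sq (neg_ne_zero.2 hp0) (by rwa [abs_neg])]
  have e3 : ∀ d : ℕ, ((d : ℝ) + 1) * ((-q ^ 2) ^ (d + 1) / (1 + (- -q ^ 2) ^ (d + 1))) =
    ((d : ℝ) + 1) * ((-1) ^ d * (-1 * (q ^ 2) ^ (d + 1) / (1 - -1 * (q ^ 2) ^ (d + 1)))) := by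
    intro d
    rw [neg_neg, neg_pow (q ^ 2), pow_succ (-1 : ℝ)]
    rw [show 1 - -1 * (q ^ 2) ^ (d + 1) = 1 + (q ^ 2) ^ (d + 1) by ring]
    ring
  simp_rw [e3]
  simp [uu_zero]
  ring

lemma SS_add_neg (hq0 : q ≠ 0) (hq1 : |q| < 1) : SS q + SS (-q) = 2 * SS (q ^ 2) := by
  have hs := SS_summable hq0 hq1
  have hs' : Summable fun n : ℤ => uu (q ^ 2) n * (-q) ^ n := by
    have := SS_summable (neg_ne_zero.2 hq0) (by rwa [abs_neg])
    rwa [neg_sq] at this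
  have h := hs.hasSum.add hs'.hasSum
  have hinj : Function.Injective (fun k : ℤ => 2 * k) := fun a b h => by simpa using h
  have hx : ∀ n : ℤ, n ∉ Set.range (fun k : ℤ => 2 * k) →
      uu (q ^ 2) n * q ^ n + uu (q ^ 2) n * (-q) ^ n = 0 := by
    intro n hn
    have ho : Odd n := by
      rw [← Int.not_even_iff_odd]
      rintro ⟨k, hk⟩
      exact hn ⟨k, by simp; omega⟩
    rw [ho.neg_zpow]; ring
  rw [← hinj.hasSum_iff hx] at h
  have h2 := (SS_summable (sq_ne hq0) (sq_abs_lt hq1)).hasSum.mul_left 2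
  have h3 := h.unique (hs_congr h2 (fun k => by
    simp only [Function.comp]
    rw [(even_two_mul k).neg_zpow]
    unfold uu
    have a1 : q ^ (2 * k) = (q ^ 2) ^ k := by
      rw [zpow_mul]; norm_cast
    have a2 : (q ^ 2) ^ (2 * k) = ((q ^ 2) ^ 2) ^ k := by
      rw [zpow_mul]; norm_cast
    rw [a1, a2]
    ring) rfl)
  unfold SS
  rw [neg_sq]
  linarith
end

section
variable {q : ℝ}

lemma sqGen_summable (hq1 : |q| < 1) : Summable fun n : ℤ => q ^ (n.natAbs ^ 2) := by
  have h := summable_geometric_of_lt_one (abs_nonneg q) hq1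
  have h1 : Summable fun n : ℕ => q ^ (n ^ 2) := by
    refine Summable.of_norm_bounded h fun n => ?_
    rw [Real.norm_eq_abs, abs_pow]
    exact pow_le_pow_of_le_one (abs_nonneg q) hq1.le (by nlinarith [sq_nonneg n, Nat.le_self_pow (two_ne_zero) n])
  apply Summable.of_nat_of_neg <;> simpa using h1

lemma natAbs_pow (hq0 : q ≠ 0) (n : ℤ) : q ^ (n.natAbs ^ 2) = q ^ (n ^ 2 : ℤ) := by
  rw [← zpow_natCast]
  congr 1
  push_cast
  simp

/-- map `(a,b) ↦ (a+b, a-b)` -/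
lemma rot_hasSum {F : ℤ × ℤ → ℝ} {s : ℝ} (h : HasSum F s)
    (h0 : ∀ n m : ℤ, ¬ Even (n + m) → F (n, m) = 0) :
    HasSum (fun y : ℤ × ℤ => F (y.1 + y.2, y.1 - y.2)) s := by
  have hinj : Function.Injective (fun y : ℤ × ℤ => (y.1 + y.2, y.1 - y.2)) := by
    intro a b h
    simp only [Prod.mk.injEq] at h
    ext <;> omega
  have hx : ∀ x : ℤ × ℤ, x ∉ Set.range (fun y : ℤ × ℤ => (y.1 + y.2, y.1 - y.2)) → F x = 0 := by
    rintro ⟨n, m⟩ hn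
    apply h0
    rintro ⟨k, hk⟩
    apply hn
    refine ⟨(k, n - k), ?_⟩
    simp only [Prod.mk.injEq]
    omega
  exact (hinj.hasSum_iff hx).2 h

lemma sqGen_mul (a b : ℝ) (ha : |a| < 1) (hb : |b| < 1) :
    HasSum (fun y : ℤ × ℤ => a ^ (y.1.natAbs ^ 2) * b ^ (y.2.natAbs ^ 2)) (sqGen a * sqGen b) := by
  have h1 := sqGen_summable ha
  have h2 := sqGen_summable hb
  have h3 := summable_mul_of_summable_norm h1.norm h2.norm
  have h4 := h1.hasSum.mul h2.hasSum h3
  unfold sqGen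
  exact h4

lemma rot_pow (hq0 : q ≠ 0) (a b : ℤ) :
    q ^ ((a + b).natAbs ^ 2) * q ^ ((a - b).natAbs ^ 2) =
      (q ^ 2) ^ (a.natAbs ^ 2) * (q ^ 2) ^ (b.natAbs ^ 2) := by
  rw [natAbs_pow hq0, natAbs_pow hq0, natAbs_pow (sq_ne hq0), natAbs_pow (sq_ne hq0),
    ← zpow_add₀ hq0, ← zpow_add₀ (sq_ne hq0)]
  rw [← zpow_natCast q 2, ← zpow_mul]
  congr 1
  push_cast
  ring

lemma neg_natAbs_pow (n : ℤ) (q : ℝ) : (-q) ^ (n.natAbs ^ 2) = (-1) ^ n * q ^ (n.natAbs ^ 2) := by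
  rw [neg_pow]
  congr 1
  rcases Int.even_or_odd n with h | h
  · rw [h.neg_one_zpow]
    exact (((Int.natAbs_even.2 h).pow_of_ne_zero two_ne_zero)).neg_one_pow
  · rw [h.neg_one_zpow]
    exact ((Int.natAbs_odd.2 h).pow).neg_one_pow

lemma sqGen_sum (hq0 : q ≠ 0) (hq1 : |q| < 1) :
    sqGen q ^ 2 + sqGen (-q) ^ 2 = 2 * sqGen (q ^ 2) ^ 2 := by
  have hq1' : |-q| < 1 := by rwa [abs_neg]
  have h := (sqGen_mul q q hq1 hq1).add (sqGen_mul (-q) (-q) hq1' hq1')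
  have h1 := rot_hasSum h (fun n m hnm => by
    simp only [neg_natAbs_pow]
    rw [show (-1 : ℝ) ^ n * q ^ n.natAbs ^ 2 * ((-1) ^ m * q ^ m.natAbs ^ 2) =
      (-1 : ℝ) ^ (n + m) * (q ^ n.natAbs ^ 2 * q ^ m.natAbs ^ 2) by
        rw [zpow_add₀ (by norm_num)]; ring]
    rw [(Int.not_even_iff_odd.1 hnm).neg_one_zpow]; ring)
  have h2 := (sqGen_mul (q ^ 2) (q ^ 2) (sq_abs_lt hq1) (sq_abs_lt hq1)).mul_left 2
  have h3 := h1.unique (hs_congr h2 (fun y => by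
    simp only
    rw [rot_pow hq0, rot_pow (neg_ne_zero.2 hq0), neg_sq]; ring) rfl)
  rw [sq, sq, h3]; ring

lemma sqGen_mul_neg (hq0 : q ≠ 0) (hq1 : |q| < 1) :
    sqGen q * sqGen (-q) = sqGen (-q ^ 2) ^ 2 := by
  have hq1' : |-q| < 1 := by rwa [abs_neg]
  have h := (sqGen_mul q (-q) hq1 hq1').add (sqGen_mul (-q) q hq1' hq1)
  have h1 := rot_hasSum h (fun n m hnm => by
    simp only [neg_natAbs_pow]
    rcases Int.even_or_odd n with hn | hn <;> rcases Int.even_or_odd m with hm | hm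
    · exact absurd (hn.add hm) hnm
    · rw [hn.neg_one_zpow, hm.neg_one_zpow]; ring
    · rw [hn.neg_one_zpow, hm.neg_one_zpow]; ring
    · exact absurd (hn.add_odd hm) hnm)
  have h2 := (sqGen_mul (-q ^ 2) (-q ^ 2) (by rw [abs_neg]; exact sq_abs_lt hq1)
    (by rw [abs_neg]; exact sq_abs_lt hq1)).mul_left 2
  have h3 := h1.unique (hs_congr h2 (fun y => by
    simp only [neg_natAbs_pow]
    have := rot_pow hq0 y.1 y.2
    have e1 : (-1 : ℝ) ^ (y.1 - y.2) = (-1) ^ y.1 * (-1) ^ y.2 := by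
      rw [zpow_sub₀ (by norm_num)]
      rcases Int.even_or_odd y.2 with hm | hm <;> rw [hm.neg_one_zpow] <;> ring
    have e2 : (-1 : ℝ) ^ (y.1 + y.2) = (-1) ^ y.1 * (-1) ^ y.2 := by
      rw [zpow_add₀ (by norm_num)]
    rw [e1, e2]
    linear_combination (2 * (-1 : ℝ) ^ y.1 * (-1) ^ y.2) * this) rfl)
  linarith

lemma sqGen_abs_le (hq0 : 0 < q) (hq1 : q < 1) : |sqGen (-q)| ≤ sqGen q := by
  have h : |q| < 1 := by rwa [abs_of_pos hq0]
  unfold sqGen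
  rw [← Real.norm_eq_abs]
  refine tsum_of_norm_bounded (sqGen_summable h).hasSum fun n => ?_
  rw [Real.norm_eq_abs, abs_pow, abs_neg, abs_of_pos hq0]

lemma SS_abs_le (hq0 : 0 < q) (hq1 : q < 1) : |SS (-q)| ≤ SS q := by
  have h : |q| < 1 := by rwa [abs_of_pos hq0]
  unfold SS
  rw [abs_mul, abs_two]
  apply mul_le_mul_of_nonneg_left _ (by norm_num)
  rw [← Real.norm_eq_abs]
  refine tsum_of_norm_bounded (SS_summable hq0.ne' h).hasSum fun n => ?_
  rw [Real.norm_eq_abs, abs_mul, abs_zpow, abs_neg, abs_of_pos hq0, neg_sq, abs_of_nonneg]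
  unfold uu
  positivity

lemma geo_tail {r : ℝ} (hr0 : 0 ≤ r) (hr : r ≤ 1 / 2) :
    HasSum (fun k : ℕ => r ^ (k + 2)) (r ^ 2 * (1 - r)⁻¹) ∧ r ^ 2 * (1 - r)⁻¹ ≤ 2 * r ^ 2 := by
  constructor
  · refine hs_congr ((hasSum_geometric_of_lt_one hr0 (by linarith)).mul_left (r ^ 2)) (fun k => ?_) rfl
    ring
  · have : (1 - r)⁻¹ ≤ 2 := by
      rw [inv_le_comm₀ (by linarith) (by norm_num)]; linarith
    nlinarith [sq_nonneg r]

lemma sqGen_asymp (hq : |q| ≤ 1 / 2) : |sqGen q - 1 - 2 * q| ≤ 4 * q ^ 2 := by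
  have h0 := abs_nonneg q
  obtain ⟨s1, s2⟩ := tsum_even_int (sqGen_summable (q := q) (by linarith)) (fun n => by simp)
  have s3 := s1.tsum_eq_zero_add
  obtain ⟨g1, g2⟩ := geo_tail h0 hq
  have e : sqGen q - 1 - 2 * q =
      2 * ∑' k : ℕ, q ^ ((((k + 1 : ℕ) : ℤ) + 1).natAbs ^ 2) := by
    unfold sqGen
    rw [s2, s3]
    simp
    ring
  rw [e, abs_mul, abs_two]
  have := tsum_of_norm_bounded g1 (f := fun k : ℕ => q ^ ((((k + 1 : ℕ) : ℤ) + 1).natAbs ^ 2))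
    (fun k => by
      rw [Real.norm_eq_abs, abs_pow]
      apply pow_le_pow_of_le_one h0 (by linarith)
      have : (((k + 1 : ℕ) : ℤ) + 1).natAbs = k + 2 := by omega
      rw [this]; nlinarith)
  rw [Real.norm_eq_abs] at this
  rw [sq_abs] at *
  linarith

lemma SS_asymp (hq0 : q ≠ 0) (hq : |q| ≤ 1 / 2) : |SS q - 1 - 4 * q| ≤ 10 * q ^ 2 := by
  have h0 := abs_nonneg q
  have hq1 : |q| < 1 := by linarith
  have t : ∀ (k : ℕ) (r : ℝ), r ^ ((k : ℤ) + 1) = r ^ (k + 1) := fun k r => by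
      exact_mod_cast zpow_natCast r (k + 1)
  obtain ⟨s1, s2⟩ := tsum_even_int (SS_summable hq0 hq1) (fun n => by
    rw [uu_neg' (sq_ne hq0) (sq_abs_lt hq1), zpow_neg]
    have h2 := zpow_ne_zero n hq0
    have h3 : (q ^ 2) ^ n = (q ^ n) ^ 2 := by
        rw [← zpow_natCast, ← zpow_natCast, ← zpow_mul, ← zpow_mul, mul_comm]
    rw [h3]
    field_simp)
  have s3 := s1.tsum_eq_zero_add
  obtain ⟨g1, g2⟩ := geo_tail h0 hq
  have e : SS q - 1 - 4 * q = - (4 * q ^ 3 / (1 + q ^ 2)) +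
      4 * ∑' k : ℕ, uu (q ^ 2) (((k + 1 : ℕ) : ℤ) + 1) * q ^ (((k + 1 : ℕ) : ℤ) + 1) := by
    unfold SS
    rw [s2, s3]
    have : 1 + q ^ 2 ≠ 0 := by positivity
    simp [uu_zero]
    unfold uu
    simp
    field_simp
    ring
  have := tsum_of_norm_bounded g1
    (f := fun k : ℕ => uu (q ^ 2) (((k + 1 : ℕ) : ℤ) + 1) * q ^ (((k + 1 : ℕ) : ℤ) + 1))
    (fun k => by
      rw [Real.norm_eq_abs, abs_mul, t, abs_pow]
      have : |uu (q ^ 2) (((k + 1 : ℕ) : ℤ) + 1)| ≤ 1 := by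
        unfold uu
        rw [t, abs_of_nonneg (by positivity), div_le_one (by positivity)]
        have : 0 ≤ (q ^ 2) ^ (k + 1 + 1) := by positivity
        linarith
      calc _ ≤ 1 * |q| ^ (k + 1 + 1) := by gcongr
        _ = _ := by ring)
  rw [Real.norm_eq_abs] at this
  rw [sq_abs] at *
  have h3 : |4 * q ^ 3 / (1 + q ^ 2)| ≤ 2 * q ^ 2 := by
    rw [abs_div, abs_of_pos (by positivity : 0 < 1 + q ^ 2), div_le_iff₀ (by positivity), abs_mul,
      abs_pow, show |q| ^ 3 = |q| * |q| ^ 2 by ring, sq_abs, abs_of_pos (by norm_num : (0 : ℝ) < 4)]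
    nlinarith [sq_nonneg q, sq_nonneg (q ^ 2)]
  rw [e]
  calc _ ≤ |-(4 * q ^ 3 / (1 + q ^ 2))| + |4 * ∑' k : ℕ, uu (q ^ 2) (((k + 1 : ℕ) : ℤ) + 1) * q ^ (((k + 1 : ℕ) : ℤ) + 1)| := abs_add_le _ _
    _ ≤ 2 * q ^ 2 + 4 * (2 * q ^ 2) := by
      rw [abs_neg, abs_mul, abs_of_pos (by norm_num : (0 : ℝ) < 4)]
      linarith
    _ = _ := by ring

lemma AA_asymp (hq : |q| ≤ 1 / 2) : |sqGen q ^ 2 - 1 - 4 * q| ≤ 24 * q ^ 2 := by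
  have h := sqGen_asymp hq
  obtain ⟨e, he⟩ : ∃ e, e = sqGen q - 1 - 2 * q := ⟨_, rfl⟩
  rw [← he] at h
  have h2 : sqGen q ^ 2 - 1 - 4 * q = 4 * q ^ 2 + 2 * e * (1 + 2 * q) + e ^ 2 := by
    rw [show sqGen q = 1 + 2 * q + e by linarith]; ring
  rw [abs_le] at hq h
  have h4 : q ^ 2 ≤ 1 / 4 := by nlinarith
  have h5 : 0 ≤ (4 * q ^ 2 - e) * (4 * q ^ 2 + e) := mul_nonneg (by linarith) (by linarith)
  have h3 : e ^ 2 ≤ 4 * q ^ 2 := by nlinarith [sq_nonneg q]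
  rw [h2, abs_le]
  constructor <;> nlinarith [sq_nonneg q, sq_nonneg e]

lemma D_step (hq0 : q ≠ 0) (hq : |q| ≤ 1 / 10) :
    |SS q - sqGen q ^ 2| * |q| ≤
      |SS (q ^ 2) - sqGen (q ^ 2) ^ 2| + |SS (-q ^ 2) - sqGen (-q ^ 2) ^ 2| := by
  have hq1 : |q| < 1 := by linarith
  have hqn : |-q| ≤ 1 / 10 := by rwa [abs_neg]
  have hp : |q ^ 2| ≤ 1 / 100 := by
    rw [abs_pow]; nlinarith [abs_nonneg q]
  have hp' : |-q ^ 2| ≤ 1 / 100 := by rwa [abs_neg]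
  have a1 := SS_add_neg hq0 hq1
  have a2 := SS_mul_neg hq0 hq1
  have a3 := sqGen_sum hq0 hq1
  have a4 := sqGen_mul_neg hq0 hq1
  have b1 := SS_asymp (neg_ne_zero.2 hq0) (by linarith : |-q| ≤ 1 / 2)
  have b2 := AA_asymp (by linarith : |q| ≤ 1 / 2)
  have b3 := SS_asymp (neg_ne_zero.2 (sq_ne hq0)) (by linarith : |-q ^ 2| ≤ 1 / 2)
  have b4 := AA_asymp (by linarith : |-q ^ 2| ≤ 1 / 2)
  set A := sqGen q ^ 2
  set A' := sqGen (-q) ^ 2 with hA'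
  set A2 := sqGen (q ^ 2) ^ 2
  set A3 := sqGen (-q ^ 2) ^ 2
  have a5 : A * A' = A3 ^ 2 := by rw [← a4]; ring
  have key : (SS q - A) * (SS (-q) - A) =
      (SS (-q ^ 2) + A3) * (SS (-q ^ 2) - A3) - 2 * A * (SS (q ^ 2) - A2) := by
    linear_combination a2 - a5 - A * a1 + A * a3
  have hqs : q ^ 2 ≤ 1 / 10 * |q| := by
    rw [← sq_abs]; nlinarith [abs_nonneg q]
  have c1 : 4 * |q| ≤ |SS (-q) - A| := by
    have e1 : SS (-q) - A = -(8 * q) + ((SS (-q) - 1 - 4 * -q) - (A - 1 - 4 * q)) := by ring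
    have e2 : |(SS (-q) - 1 - 4 * -q) - (A - 1 - 4 * q)| ≤ 34 * q ^ 2 := by
      have := abs_sub (SS (-q) - 1 - 4 * -q) (A - 1 - 4 * q)
      rw [neg_sq] at b1
      linarith
    have e3 := abs_sub_abs_le_abs_sub (-(8 * q)) (-((SS (-q) - 1 - 4 * -q) - (A - 1 - 4 * q)))
    rw [abs_neg, abs_neg, sub_neg_eq_add, ← e1, abs_mul, abs_of_pos (by norm_num : (0 : ℝ) < 8)] at e3
    linarith [abs_nonneg q]
  have hqq : q ^ 2 ≤ 1 / 100 := (le_abs_self _).trans hp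
  have hq4 : (-q ^ 2) ^ 2 ≤ 1 / 100 := by nlinarith [sq_nonneg q]
  have c2 : |2 * A| ≤ 4 := by
    rw [abs_le] at b2 hq ⊢
    constructor <;> linarith
  have c3 : |SS (-q ^ 2) + A3| ≤ 4 := by
    rw [abs_le] at b3 b4 hp' ⊢
    constructor <;> linarith
  have f1 := congrArg abs key
  rw [abs_mul] at f1
  have f2 := abs_sub ((SS (-q ^ 2) + A3) * (SS (-q ^ 2) - A3)) (2 * A * (SS (q ^ 2) - A2))
  rw [← f1, abs_mul, abs_mul (2 * A)] at f2
  have g0 := abs_nonneg (SS q - A)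
  have g1 := mul_le_mul_of_nonneg_left c1 g0
  have g2 := mul_le_mul_of_nonneg_right c2 (abs_nonneg (SS (q ^ 2) - A2))
  have g3 := mul_le_mul_of_nonneg_right c3 (abs_nonneg (SS (-q ^ 2) - A3))
  linarith

lemma D_small_aux (n : ℕ) : ∀ q : ℝ, q ≠ 0 → |q| ≤ 1 / 10 →
    |SS q - sqGen q ^ 2| ≤ 34 * (1 / 5) ^ n * q ^ 2 := by
  induction n with
  | zero =>
    intro q hq0 hq
    have b1 := SS_asymp hq0 (by linarith : |q| ≤ 1 / 2)
    have b2 := AA_asymp (by linarith : |q| ≤ 1 / 2)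
    have := abs_sub (SS q - 1 - 4 * q) (sqGen q ^ 2 - 1 - 4 * q)
    rw [show SS q - 1 - 4 * q - (sqGen q ^ 2 - 1 - 4 * q) = SS q - sqGen q ^ 2 by ring] at this
    simp
    linarith
  | succ n ih =>
    intro q hq0 hq
    have hp : |q ^ 2| ≤ 1 / 10 := by
      rw [abs_pow]; nlinarith [abs_nonneg q]
    have h1 := ih (q ^ 2) (sq_ne hq0) hp
    have h2 := ih (-q ^ 2) (neg_ne_zero.2 (sq_ne hq0)) (by rwa [abs_neg])
    have h3 := D_step hq0 hq
    have hpos := abs_pos.2 hq0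
    rw [← mul_le_mul_iff_left₀ hpos]
    have hM : (0 : ℝ) ≤ 34 * (1 / 5) ^ n * (q ^ 2 * |q|) := by positivity
    have h4 : (q ^ 2) ^ 2 = q ^ 2 * |q| * |q| := by
      rw [mul_assoc, abs_mul_abs_self]; ring
    rw [neg_sq, h4] at h2
    rw [h4] at h1
    rw [pow_succ (1 / 5 : ℝ) n]
    have := mul_le_mul_of_nonneg_left hq hM
    linarith

lemma D_small (q : ℝ) (hq0 : q ≠ 0) (hq : |q| ≤ 1 / 10) : SS q = sqGen q ^ 2 := by
  have h : Filter.Tendsto (fun n : ℕ => 34 * (1 / 5 : ℝ) ^ n * q ^ 2) Filter.atTop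
      (nhds (34 * 0 * q ^ 2)) :=
    ((tendsto_pow_atTop_nhds_zero_of_lt_one (by norm_num) (by norm_num)).const_mul 34).mul_const _
  have h2 := ge_of_tendsto' h (fun n => D_small_aux n q hq0 hq)
  have h3 : |SS q - sqGen q ^ 2| = 0 := le_antisymm (by simpa using h2) (abs_nonneg _)
  linarith [abs_eq_zero.1 h3]

lemma D_all (n : ℕ) : ∀ q : ℝ, 0 < q → q < 1 → q ^ (2 ^ n) ≤ 1 / 10 →
    SS q = sqGen q ^ 2 ∧ SS (-q) = sqGen (-q) ^ 2 := by
  induction n with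
  | zero =>
    intro q hq0 hq1 h
    have h : q ≤ 1 / 10 := by simpa using h
    have h' : |q| ≤ 1 / 10 := by rwa [abs_of_pos hq0]
    exact ⟨D_small q hq0.ne' h', D_small (-q) (neg_ne_zero.2 hq0.ne') (by rwa [abs_neg])⟩
  | succ n ih =>
    intro q hq0 hq1 h
    obtain ⟨i1, i2⟩ := ih (q ^ 2) (by positivity) (by nlinarith)
      (by rw [← pow_mul, ← pow_succ']; exact h)
    have hq : |q| < 1 := by rwa [abs_of_pos hq0]
    have a1 := SS_add_neg hq0.ne' hq
    have a2 := SS_mul_neg hq0.ne' hq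
    have a3 := sqGen_sum hq0.ne' hq
    have a4 := sqGen_mul_neg hq0.ne' hq
    have o1 := SS_abs_le hq0 hq1
    have o2 := sqGen_abs_le hq0 hq1
    have o3 : sqGen (-q) ^ 2 ≤ sqGen q ^ 2 := by
      rw [← sq_abs (sqGen (-q))]
      exact pow_le_pow_left₀ (abs_nonneg _) o2 2
    have o4 : SS (-q) ≤ SS q := (le_abs_self _).trans o1
    rw [i1] at a1
    rw [i2, ← a4] at a2
    have e : (SS q - SS (-q)) ^ 2 = (sqGen q ^ 2 - sqGen (-q) ^ 2) ^ 2 := by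
      have : SS q + SS (-q) = sqGen q ^ 2 + sqGen (-q) ^ 2 := by linarith
      calc (SS q - SS (-q)) ^ 2 = (SS q + SS (-q)) ^ 2 - 4 * (SS q * SS (-q)) := by ring
        _ = _ := by rw [this, a2]; ring
    have e2 := (pow_left_inj₀ (by linarith) (by linarith) two_ne_zero).1 e
    constructor <;> linarith

/-- Jacobi's four squares theorem. -/
lemma four_squares (hq0 : 0 < q) (hq1 : q < 1) : sqGen q ^ 4 =
    1 + 8 * ∑' k : ℕ, ((k : ℝ) + 1) * (q ^ (k + 1) / (1 + (-q) ^ (k + 1))) := by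
  have hq : |q| < 1 := by rwa [abs_of_pos hq0]
  obtain ⟨n, hn⟩ := exists_pow_lt_of_lt_one (show (0 : ℝ) < 1 / 10 by norm_num) hq1
  have h : q ^ (2 ^ n) ≤ 1 / 10 :=
    (pow_le_pow_of_le_one hq0.le hq1.le (Nat.lt_two_pow_self).le).trans hn.le
  rw [← SS_sq hq0.ne' hq, (D_all n q hq0 hq1 h).1]
  ring
end

/-- Exponential (Dirichlet-type) series `Σ_{k≥1} c_k k^n e^{ks}`. -/
noncomputable def EE (c : ℕ → ℝ) (n : ℕ) (s : ℝ) : ℝ :=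
  ∑' k : ℕ, c k * ((k : ℝ) + 1) ^ n * Real.exp (((k : ℝ) + 1) * s)

lemma EE_bound_summable (M d : ℝ) (hd : 0 < d) (n : ℕ) :
    Summable fun k : ℕ => M * (((k : ℝ) + 1) ^ n * Real.exp (-((k : ℝ) + 1) * d)) := by
  apply Summable.mul_left
  have h := (summable_nat_add_iff 1).2 (Real.summable_pow_mul_exp_neg_nat_mul n hd)
  refine h.congr fun k => ?_
  push_cast
  ring_nf

lemma EE_term_bound {c : ℕ → ℝ} {M R : ℝ} (hc : ∀ k : ℕ, |c k| ≤ M * Real.exp (-((k : ℝ) + 1) * R))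
    (n k : ℕ) {s s1 : ℝ} (hs : s ≤ s1) :
    ‖c k * ((k : ℝ) + 1) ^ n * Real.exp (((k : ℝ) + 1) * s)‖ ≤
      M * (((k : ℝ) + 1) ^ n * Real.exp (-((k : ℝ) + 1) * (R - s1))) := by
  have h1 : (0 : ℝ) ≤ ((k : ℝ) + 1) ^ n := by positivity
  rw [Real.norm_eq_abs, abs_mul, abs_mul, abs_of_nonneg h1, abs_of_pos (Real.exp_pos _)]
  have h2 : Real.exp (((k : ℝ) + 1) * s) ≤ Real.exp (((k : ℝ) + 1) * s1) := by
    apply Real.exp_le_exp.2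
    apply mul_le_mul_of_nonneg_left hs; positivity
  have h3 : Real.exp (-((k : ℝ) + 1) * (R - s1)) =
      Real.exp (-((k : ℝ) + 1) * R) * Real.exp (((k : ℝ) + 1) * s1) := by
    rw [← Real.exp_add]; ring_nf
  rw [h3]
  calc _ ≤ (M * Real.exp (-((k : ℝ) + 1) * R)) * ((k : ℝ) + 1) ^ n * Real.exp (((k : ℝ) + 1) * s1) := by
        have h4 : 0 ≤ M * Real.exp (-((k : ℝ) + 1) * R) := (abs_nonneg _).trans (hc k)
        have := hc k
        gcongr
    _ = _ := by ring

lemma EE_summable {c : ℕ → ℝ} {M R : ℝ} (hc : ∀ k : ℕ, |c k| ≤ M * Real.exp (-((k : ℝ) + 1) * R))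
    (n : ℕ) {s : ℝ} (hs : s < R) :
    Summable fun k : ℕ => c k * ((k : ℝ) + 1) ^ n * Real.exp (((k : ℝ) + 1) * s) :=
  Summable.of_norm_bounded (EE_bound_summable M (R - s) (by linarith) n)
    fun k => EE_term_bound hc n k le_rfl

lemma EE_deriv {c : ℕ → ℝ} {M R : ℝ} (hc : ∀ k : ℕ, |c k| ≤ M * Real.exp (-((k : ℝ) + 1) * R))
    (n : ℕ) {s : ℝ} (hs : s < R) : HasDerivAt (EE c n) (EE c (n + 1) s) s := by
  obtain ⟨s1, h1, h2⟩ := exists_between hs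
  have := hasDerivAt_tsum_of_isPreconnected (𝕜 := ℝ)
    (g := fun (k : ℕ) (s : ℝ) => c k * ((k : ℝ) + 1) ^ n * Real.exp (((k : ℝ) + 1) * s))
    (g' := fun (k : ℕ) (s : ℝ) => c k * ((k : ℝ) + 1) ^ (n + 1) * Real.exp (((k : ℝ) + 1) * s))
    (EE_bound_summable M (R - s1) (by linarith) (n + 1)) (isOpen_Iio (a := s1))
    isPreconnected_Iio (fun k y _ => ?_) (fun k y hy => ?_) (y₀ := s) h1 (EE_summable hc n hs) h1
  · exact this
  · have h := (((hasDerivAt_id y).const_mul ((k : ℝ) + 1)).exp).const_mul (c k * ((k : ℝ) + 1) ^ n)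
    refine h.congr_deriv ?_
    simp only [id]
    ring
  · exact EE_term_bound hc (n + 1) k (le_of_lt hy)

/-- `tanh (s/2)` -/
noncomputable def tau (s : ℝ) : ℝ := 1 - 2 / (Real.exp s + 1)

lemma expp_ne (s : ℝ) : Real.exp s + 1 ≠ 0 := by positivity

lemma tau_contDiff : ContDiff ℝ (⊤ : ℕ∞) tau := by
  unfold tau
  exact contDiff_const.sub (contDiff_const.div (Real.contDiff_exp.add contDiff_const) expp_ne)

lemma tau_deriv (n : ℕ) (s : ℝ) :
    HasDerivAt (iteratedDeriv n tau) (iteratedDeriv (n + 1) tau s) s := by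
  rw [iteratedDeriv_succ]
  apply DifferentiableAt.hasDerivAt
  exact (tau_contDiff.differentiable_iteratedDeriv n (by exact_mod_cast WithTop.coe_lt_top n)) s

lemma tau_neg (s : ℝ) : tau (-s) = - tau s := by
  unfold tau
  have := expp_ne s
  have h2 := Real.exp_pos s
  rw [Real.exp_neg]
  field_simp
  ring

lemma tau_iter_neg (n : ℕ) (s : ℝ) :
    iteratedDeriv n tau (-s) = (-1) ^ (n + 1) * iteratedDeriv n tau s := by
  have h := iteratedDeriv_comp_neg n tau (-s)
  have e : (fun x => tau (-x)) = fun x => - tau x := by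
    funext x; exact tau_neg x
  rw [e, iteratedDeriv_fun_neg, neg_neg, smul_eq_mul] at h
  rw [pow_succ, mul_neg_one, neg_mul, ← h, neg_neg]

noncomputable def sg (k : ℕ) : ℝ := (-1) ^ (k + 1)

lemma sg_bound (k : ℕ) : |sg k| ≤ 1 * Real.exp (-((k : ℝ) + 1) * 0) := by
  unfold sg; simp

lemma tau_series0 {s : ℝ} (hs : s < 0) : tau s = -1 - 2 * EE sg 0 s := by
  have h1 : |-Real.exp s| < 1 := by
    rw [abs_neg, abs_of_pos (Real.exp_pos s)]; exact Real.exp_lt_one_iff.2 hs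
  have h2 := (hasSum_geometric_of_abs_lt_one h1).mul_left (-Real.exp s)
  have h3 : EE sg 0 s = -Real.exp s * (1 - -Real.exp s)⁻¹ := by
    unfold EE
    rw [← h2.tsum_eq]
    apply tsum_congr
    intro k
    rw [← pow_succ', neg_pow, ← Real.exp_nat_mul]
    unfold sg
    push_cast
    ring
  rw [h3]
  unfold tau
  have := expp_ne s
  rw [show 1 - -Real.exp s = Real.exp s + 1 by ring]
  field_simp
  ring

lemma tau_series (n : ℕ) : ∀ s : ℝ, s < 0 → iteratedDeriv (n + 1) tau s = - 2 * EE sg (n + 1) s := by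
  induction n with
  | zero =>
    intro s hs
    have h1 := tau_deriv 0 s
    have h2 : HasDerivAt tau (0 - 2 * EE sg (0 + 1) s) s := by
      have := ((hasDerivAt_const s (-1 : ℝ)).sub ((EE_deriv sg_bound 0 hs).const_mul 2))
      refine this.congr_of_eventuallyEq ?_
      filter_upwards [Iio_mem_nhds hs] with y hy
      exact tau_series0 hy
    rw [iteratedDeriv_zero] at h1
    rw [h1.unique h2]; ring
  | succ n ih =>
    intro s hs
    have h1 := tau_deriv (n + 1) s
    have h2 : HasDerivAt (iteratedDeriv (n + 1) tau) (-2 * EE sg (n + 1 + 1) s) s := by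
      have := (EE_deriv sg_bound (n + 1) hs).const_mul (-2)
      refine this.congr_of_eventuallyEq ?_
      filter_upwards [Iio_mem_nhds hs] with y hy
      exact ih y hy
    exact h1.unique h2

section
variable {q : ℝ}

noncomputable def cq (q : ℝ) (k : ℕ) : ℝ := q ^ (k + 1) / (1 + (-q) ^ (k + 1))

lemma cq_den (hq0 : 0 < q) (hq1 : q < 1) (k : ℕ) : 1 - q ≤ 1 + (-q) ^ (k + 1) := by
  have h1 : |(-q) ^ (k + 1)| ≤ q := by
    rw [abs_pow, abs_neg, abs_of_pos hq0, pow_succ]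
    have := pow_le_one₀ (n := k) hq0.le hq1.le
    nlinarith
  have := (abs_le.1 h1).1
  linarith

lemma cq_bound (hq0 : 0 < q) (hq1 : q < 1) (k : ℕ) :
    |cq q k| ≤ (1 - q)⁻¹ * Real.exp (-((k : ℝ) + 1) * (-Real.log q)) := by
  have h1 := cq_den hq0 hq1 k
  have h2 : 0 < 1 - q := by linarith
  have h3 : Real.exp (-((k : ℝ) + 1) * (-Real.log q)) = q ^ (k + 1) := by
    rw [neg_mul_neg, show ((k : ℝ) + 1) = ((k + 1 : ℕ) : ℝ) by push_cast; ring, Real.exp_nat_mul,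
      Real.exp_log hq0]
  rw [h3]
  unfold cq
  rw [abs_div, abs_of_pos (by positivity : 0 < q ^ (k + 1)), abs_of_pos (h2.trans_le h1), div_eq_inv_mul]
  gcongr

/-- the `n`-th derivative of `G`. -/
noncomputable def Gd (q : ℝ) (n : ℕ) (s : ℝ) : ℝ :=
  iteratedDeriv n tau s + 2 * (EE (cq q) n s - (-1) ^ n * EE (cq q) n (-s))

lemma Gd_deriv (hq0 : 0 < q) (hq1 : q < 1) (n : ℕ) {s : ℝ} (hs : |s| < -Real.log q) :
    HasDerivAt (Gd q n) (Gd q (n + 1) s) s := by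
  rw [abs_lt] at hs
  have h1 := EE_deriv (cq_bound hq0 hq1) n hs.2
  have h2 := EE_deriv (cq_bound hq0 hq1) n (s := -s) (by linarith)
  have h3 := h2.comp s (hasDerivAt_neg s)
  have h4 := (tau_deriv n s).add ((h1.sub (h3.const_mul ((-1) ^ n))).const_mul 2)
  refine h4.congr_deriv ?_
  unfold Gd
  ring

lemma Gd_neg (n : ℕ) (s : ℝ) : Gd q n (-s) = (-1) ^ (n + 1) * Gd q n s := by
  unfold Gd
  rw [tau_iter_neg, neg_neg]
  have : ((-1 : ℝ) ^ n) ^ 2 = 1 := by rw [← pow_mul, mul_comm, pow_mul]; simp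
  rw [pow_succ]
  linear_combination (2 * EE (cq q) n (-s)  ) * (-this)

lemma Gd_even_zero (n : ℕ) : Gd q (2 * n) 0 = 0 := by
  have h := Gd_neg (q := q) (2 * n) 0
  rw [neg_zero, pow_succ, pow_mul] at h
  norm_num at h
  linarith

lemma int_split {p s : ℝ} (hq0 : 0 < q) (hq1 : q < 1) (hp : p = -q) (h1 : Real.log q < s) (h2 : s < 0) (j : ℕ)
    (hj : Even j) :
    ∑' n : ℤ, ((n : ℝ) ^ j * uu p n) * (-Real.exp s) ^ n =
      (0 : ℝ) ^ j / 2 + EE sg j s - EE (cq q) j s + EE (cq q) j (-s) := by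
  have hp0 : p ≠ 0 := by rw [hp]; exact neg_ne_zero.2 hq0.ne'
  have hpq : |p| = q := by rw [hp, abs_neg, abs_of_pos hq0]
  have hp1 : |p| < 1 := by rwa [hpq]
  have hz : |-Real.exp s| = Real.exp s := by rw [abs_neg, abs_of_pos (Real.exp_pos s)]
  have hz1 : |p| < |-Real.exp s| := by
    rw [hpq, hz, ← Real.exp_log hq0]; exact Real.exp_lt_exp.2 h1
  have hz2 : |-Real.exp s| < 1 := by rw [hz]; exact Real.exp_lt_one_iff.2 h2
  have hS := uu_summable hp0 hp1 j hz1 hz2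
  set f : ℤ → ℝ := fun n => ((n : ℝ) ^ j * uu p n) * (-Real.exp s) ^ n with hf
  have e1 : ∀ k : ℕ, f ((k + 1 : ℕ) : ℤ) = sg k * ((k : ℝ) + 1) ^ j * Real.exp (((k : ℝ) + 1) * s) -
      cq q k * ((k : ℝ) + 1) ^ j * Real.exp (((k : ℝ) + 1) * s) := by
    intro k
    simp only [hf]
    unfold uu sg cq
    have hd : (1 + (-q) ^ (k + 1)) ≠ 0 := by have := cq_den hq0 hq1 k; linarith
    rw [zpow_natCast, zpow_natCast, neg_pow (Real.exp s), ← Real.exp_nat_mul, hp]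
    push_cast
    have h3 : (-q) ^ (k + 1) = (-1) ^ (k + 1) * q ^ (k + 1) := neg_pow _ _
    have h4 : ((-1 : ℝ) ^ (k + 1)) ^ 2 = 1 := by rw [← pow_mul, mul_comm, pow_mul]; simp
    field_simp
    rw [h3]
    linear_combination (-q ^ (k + 1)) * h4
  have e2 : ∀ k : ℕ, f (-((k : ℤ) + 1)) =
      cq q k * ((k : ℝ) + 1) ^ j * Real.exp (((k : ℝ) + 1) * -s) := by
    intro k
    simp only [hf]
    rw [uu_neg' hp0 hp1]
    unfold uu cq
    rw [zpow_neg, show ((k : ℤ) + 1) = ((k + 1 : ℕ) : ℤ) by push_cast; ring, zpow_natCast, zpow_natCast,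
      neg_pow (Real.exp s), ← Real.exp_nat_mul, hp, mul_neg, Real.exp_neg]
    push_cast
    rw [hj.neg_pow]
    have h3 : (-q) ^ (k + 1) = (-1) ^ (k + 1) * q ^ (k + 1) := neg_pow _ _
    have h4 : ((-1 : ℝ) ^ (k + 1)) ≠ 0 := by positivity
    rw [mul_inv]
    field_simp
    rw [h3]
  have s1 := EE_summable sg_bound j h2
  have s2 := EE_summable (cq_bound hq0 hq1) j (s := s) (by linarith)
  have s3 := EE_summable (cq_bound hq0 hq1) j (s := -s) (by linarith)
  have t1 : HasSum (fun k : ℕ => f ((k + 1 : ℕ) : ℤ)) (EE sg j s - EE (cq q) j s) :=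
    hs_congr (s1.hasSum.sub s2.hasSum) e1 rfl
  have t2 : HasSum (fun k : ℕ => f (-((k : ℤ) + 1))) (EE (cq q) j (-s)) :=
    hs_congr s3.hasSum e2 rfl
  have t3 : HasSum (fun k : ℕ => f (k : ℤ)) (f 0 + (EE sg j s - EE (cq q) j s)) := by
    rw [← hasSum_nat_add_iff' 1]
    simpa using t1
  have t4 := (t3.of_nat_of_neg_add_one t2).tsum_eq
  rw [t4]
  have : f 0 = 0 ^ j / 2 := by
    simp only [hf]
    rw [uu_zero]
    simp
    ring
  rw [this]
  ring

/-- ODE on the negative side -/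
lemma G_ode (hq0 : 0 < q) (hq1 : q < 1) : ∃ B : ℝ, ∀ s : ℝ, |s| < -Real.log q →
    Gd q 2 s = Gd q 0 s ^ 3 / 2 + B * Gd q 0 s := by
  have hp0 : -q ≠ 0 := neg_ne_zero.2 hq0.ne'
  have hpq : |-q| = q := by rw [abs_neg, abs_of_pos hq0]
  have hp1 : |-q| < 1 := by rwa [hpq]
  obtain ⟨b, hb⟩ := h_cubic hp0 hp1
  have neg_side : ∀ s : ℝ, Real.log q < s → s < 0 →
      Gd q 2 s = Gd q 0 s ^ 3 / 2 + (-2 * b) * Gd q 0 s := by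
    intro s h1 h2
    have hz : |-Real.exp s| = Real.exp s := by rw [abs_neg, abs_of_pos (Real.exp_pos s)]
    have hz1 : |-q| < |-Real.exp s| := by
      rw [hpq, hz, ← Real.exp_log hq0]; exact Real.exp_lt_exp.2 h1
    have hz2 : |-Real.exp s| < 1 := by rw [hz]; exact Real.exp_lt_one_iff.2 h2
    have h := hb _ hz1 hz2
    have i0 := int_split hq0 hq1 rfl h1 h2 0 (by simp)
    have i2 := int_split hq0 hq1 rfl h1 h2 2 (by simp)
    simp only [pow_zero, one_mul] at i0
    rw [i0, i2] at h
    have g0 : Gd q 0 s = -2 * (1 / 2 + EE sg 0 s - EE (cq q) 0 s + EE (cq q) 0 (-s)) := by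
      unfold Gd
      rw [iteratedDeriv_zero, tau_series0 h2]
      ring
    have g2 : Gd q 2 s = -2 * (0 ^ 2 / 2 + EE sg 2 s - EE (cq q) 2 s + EE (cq q) 2 (-s)) := by
      unfold Gd
      rw [tau_series 1 s h2]
      ring
    rw [g0, g2]
    linear_combination 4 * h
  refine ⟨-2 * b, fun s hs => ?_⟩
  rw [abs_lt] at hs
  rcases lt_trichotomy s 0 with h | h | h
  · exact neg_side s (by linarith) h
  · subst h
    have a0 := Gd_even_zero (q := q) 0
    have a2 := Gd_even_zero (q := q) 1
    norm_num at a0 a2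
    rw [a0, a2]; ring
  · have := neg_side (-s) (by linarith) (by linarith)
    rw [Gd_neg, Gd_neg] at this
    linear_combination -this

end

open PowerSeries in
/-- Taylor series at 0 of a function -/
noncomputable def taylS (f : ℝ → ℝ) : PowerSeries ℝ :=
  PowerSeries.mk fun n => iteratedDeriv n f 0 / (Nat.factorial n : ℝ)

lemma taylS_mul {f g : ℝ → ℝ} (hf : ContDiff ℝ (⊤ : ℕ∞) f) (hg : ContDiff ℝ (⊤ : ℕ∞) g) :
    taylS (f * g) = taylS f * taylS g := by
  ext n
  unfold taylS
  rw [PowerSeries.coeff_mul, PowerSeries.coeff_mk, Finset.Nat.sum_antidiagonal_eq_sum_range_succ_mk,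
    iteratedDeriv_mul ((hf.of_le (by exact_mod_cast le_top)).contDiffAt)
      ((hg.of_le (by exact_mod_cast le_top)).contDiffAt), Finset.sum_div]
  apply Finset.sum_congr rfl
  intro i hi
  have hi : i ≤ n := by simpa [Nat.lt_succ_iff] using hi
  rw [PowerSeries.coeff_mk, PowerSeries.coeff_mk, Nat.cast_choose ℝ hi]
  have h1 : (Nat.factorial i : ℝ) ≠ 0 := by positivity
  have h2 : (Nat.factorial (n - i) : ℝ) ≠ 0 := by positivity
  have h3 : (Nat.factorial n : ℝ) ≠ 0 := by positivity
  field_simp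

lemma taylS_exp : taylS (fun s => Real.exp s + 1) = PowerSeries.exp ℝ + 1 := by
  ext n
  unfold taylS
  rw [PowerSeries.coeff_mk, map_add, PowerSeries.coeff_exp, PowerSeries.coeff_one]
  rcases n with _ | n
  · simp
  · rw [iteratedDeriv_succ']
    have : deriv (fun s => Real.exp s + 1) = Real.exp := by
      funext s; simp
    rw [this, iteratedDeriv_eq_iterate, Real.iter_deriv_exp]
    simp

lemma taylS_const (a : ℝ) : taylS (fun _ => a) = PowerSeries.C a := by
  ext n
  unfold taylS
  rw [PowerSeries.coeff_mk, PowerSeries.coeff_C, iteratedDeriv_const]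
  split_ifs with h
  · subst h; simp
  · simp

noncomputable def sig (s : ℝ) : ℝ := -2 / (Real.exp s + 1)

lemma sig_contDiff : ContDiff ℝ (⊤ : ℕ∞) sig := by
  unfold sig
  exact (contDiff_const.div (Real.contDiff_exp.add contDiff_const) expp_ne)

lemma sig_ser : taylS sig * (PowerSeries.exp ℝ + 1) = PowerSeries.C (-2) := by
  rw [← taylS_exp, ← taylS_mul sig_contDiff (Real.contDiff_exp.add contDiff_const), ← taylS_const]
  congr 1
  funext s
  have := expp_ne s
  simp only [Pi.mul_apply]
  unfold sig
  field_simp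

lemma sig_bern : PowerSeries.X * taylS sig =
    PowerSeries.C 2 * (PowerSeries.rescale 2 (bernoulliPowerSeries ℝ) - bernoulliPowerSeries ℝ) := by
  have h1 := bernoulliPowerSeries_mul_exp_sub_one ℝ
  have h2 := congrArg (PowerSeries.rescale (2 : ℝ)) h1
  have h3 := PowerSeries.exp_pow_eq_rescale_exp (A := ℝ) 2
  push_cast at h3
  rw [map_mul, map_sub, ← h3, map_one, PowerSeries.rescale_X] at h2
  have n1 : PowerSeries.exp ℝ - 1 ≠ 0 := by
    intro h
    rw [h, mul_zero] at h1
    exact PowerSeries.X_ne_zero h1.symm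
  have n2 : PowerSeries.exp ℝ + 1 ≠ 0 := by
    intro h
    have := sig_ser
    rw [h, mul_zero] at this
    have := congrArg PowerSeries.constantCoeff this
    simp at this
  apply mul_right_cancel₀ n2
  apply mul_right_cancel₀ n1
  rw [mul_assoc PowerSeries.X, sig_ser]
  have c1 : (PowerSeries.C (-2 : ℝ) : PowerSeries ℝ) = -2 := by rw [map_neg, map_ofNat]
  have c2 : (PowerSeries.C (2 : ℝ) : PowerSeries ℝ) = 2 := map_ofNat _ 2
  rw [c2] at h2
  rw [c1, c2]
  linear_combination (-2) * h2 + 2 * (PowerSeries.exp ℝ + 1) * h1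

lemma sig_val (n : ℕ) : iteratedDeriv n sig 0 =
    2 * (2 ^ (n + 1) - 1) * ((bernoulli (n + 1) : ℚ) : ℝ) / (n + 1) := by
  have h := congrArg (PowerSeries.coeff (n + 1)) sig_bern
  rw [PowerSeries.coeff_succ_X_mul, PowerSeries.coeff_C_mul, map_sub, PowerSeries.coeff_rescale] at h
  unfold taylS bernoulliPowerSeries at h
  simp only [PowerSeries.coeff_mk] at h
  rw [Nat.factorial_succ] at h
  simp only [eq_ratCast] at h
  push_cast at h
  have h3 : (Nat.factorial n : ℝ) ≠ 0 := by positivity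
  have h4 : (n : ℝ) + 1 ≠ 0 := by positivity
  field_simp at h ⊢
  linear_combination h

lemma bern_abs (n : ℕ) (hn : n ≠ 0) :
    |((bernoulli (2 * n) : ℚ) : ℝ)| = (-1) ^ (n + 1) * ((bernoulli (2 * n) : ℚ) : ℝ) := by
  have h := hasSum_zeta_nat hn
  have h0 := h.nonneg (fun k => by positivity)
  have h1 : 0 ≤ (-1) ^ (n + 1) * ((bernoulli (2 * n) : ℚ) : ℝ) := by
    have hp : 0 < (2 : ℝ) ^ (2 * n - 1) * Real.pi ^ (2 * n) / (Nat.factorial (2 * n) : ℝ) := by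
      have := Real.pi_pos
      positivity
    refine nonneg_of_mul_nonneg_left (b := (2 : ℝ) ^ (2 * n - 1) * Real.pi ^ (2 * n) / (Nat.factorial (2 * n) : ℝ)) ?_ hp
    refine h0.trans_eq ?_
    ring
  rw [← abs_of_nonneg h1, abs_mul, abs_pow]
  simp

lemma tau_val (n : ℕ) : iteratedDeriv (2 * n + 1) tau 0 = (-1) ^ n * tangentNum (n + 1) := by
  have e : iteratedDeriv (2 * n + 1) tau 0 = iteratedDeriv (2 * n + 1) sig 0 := by
    rw [iteratedDeriv_succ', iteratedDeriv_succ']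
    congr 1
    funext s
    have : tau = fun s => sig s + 1 := by
      funext s; unfold tau sig; ring
    rw [this]
    simp
  rw [e, sig_val]
  unfold tangentNum
  rw [show 2 * n + 1 + 1 = 2 * (n + 1) by ring, bern_abs _ (by omega), pow_mul]
  have : ((-1 : ℝ) ^ n) ^ 2 = 1 := by rw [← pow_mul, mul_comm, pow_mul]; simp
  have h4 : (n : ℝ) + 1 ≠ 0 := by positivity
  push_cast
  rw [show (2 : ℝ) * n + 1 + 1 = 2 * (n + 1) by ring, pow_succ (-1 : ℝ) (n + 1), pow_succ (-1 : ℝ) n]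
  field_simp
  norm_num
  linear_combination (-((4 : ℝ) ^ (n + 1) - 1) * ((bernoulli (2 * (n + 1)) : ℚ) : ℝ)) * this

lemma hc_poly (up d dn : ℕ → ℝ) (n : ℕ) (x : ℝ) :
    ∑ k ∈ Finset.range (n + 2), hc up d dn (n + 1) k * x ^ (2 * k + 1) =
      ∑ k ∈ Finset.range n, dn k * hc up d dn n (k + 1) * x ^ (2 * k + 1) +
      ∑ k ∈ Finset.range (n + 1), hc up d dn n k * (d k * x ^ (2 * k + 1) + up k * x ^ (2 * k + 3)) := by
  have z1 : hc up d dn n (n + 1) = 0 := hc_zero_of_lt _ _ _ _ _ (by omega)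
  have z2 : hc up d dn n (n + 2) = 0 := hc_zero_of_lt _ _ _ _ _ (by omega)
  have a1 : ∑ k ∈ Finset.range n, dn k * hc up d dn n (k + 1) * x ^ (2 * k + 1) =
      ∑ k ∈ Finset.range (n + 1), dn (k + 1) * hc up d dn n (k + 2) * x ^ (2 * k + 3) +
        dn 0 * hc up d dn n 1 * x := by
    have := Finset.sum_range_succ' (fun k => dn k * hc up d dn n (k + 1) * x ^ (2 * k + 1)) (n + 1)
    rw [Finset.sum_range_succ, Finset.sum_range_succ, z1, z2] at this
    simp only [mul_zero, zero_mul, add_zero] at this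
    rw [this]
    simp only [zero_add, pow_one]
    congr 1
  have a2 : ∑ k ∈ Finset.range (n + 1), hc up d dn n k * (d k * x ^ (2 * k + 1)) =
      ∑ k ∈ Finset.range (n + 1), hc up d dn n (k + 1) * (d (k + 1) * x ^ (2 * k + 3)) +
        hc up d dn n 0 * (d 0 * x) := by
    have := Finset.sum_range_succ' (fun k => hc up d dn n k * (d k * x ^ (2 * k + 1))) (n + 1)
    rw [Finset.sum_range_succ, z1] at this
    simp only [mul_zero, zero_mul, add_zero] at this
    rw [this]
    simp only [zero_add, pow_one]
    congr 1
  simp only [mul_add, Finset.sum_add_distrib]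
  rw [a1, a2, Finset.sum_range_succ']
  have a3 : ∑ k ∈ Finset.range (n + 1), hc up d dn (n + 1) (k + 1) * x ^ (2 * (k + 1) + 1) =
     ∑ k ∈ Finset.range (n + 1), dn (k + 1) * hc up d dn n (k + 2) * x ^ (2 * k + 3) +
     ∑ k ∈ Finset.range (n + 1), hc up d dn n (k + 1) * (d (k + 1) * x ^ (2 * k + 3)) +
     ∑ k ∈ Finset.range (n + 1), hc up d dn n k * (up k * x ^ (2 * k + 3)) := by
    rw [← Finset.sum_add_distrib, ← Finset.sum_add_distrib]
    apply Finset.sum_congr rfl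
    intro k _
    rw [hc]
    ring
  rw [a3, hc]
  ring

section
variable {q : ℝ}

lemma Gd_first (hq0 : 0 < q) (hq1 : q < 1) {B : ℝ} (hB : ∀ s : ℝ, |s| < -Real.log q →
    Gd q 2 s = Gd q 0 s ^ 3 / 2 + B * Gd q 0 s) {s : ℝ} (hs : |s| < -Real.log q) :
    Gd q 1 s ^ 2 = Gd q 1 0 ^ 2 + B * Gd q 0 s ^ 2 + Gd q 0 s ^ 4 / 4 := by
  have hL : 0 < -Real.log q := by have := Real.log_neg hq0 hq1; linarith
  set P : ℝ → ℝ := fun s => Gd q 1 s ^ 2 - B * Gd q 0 s ^ 2 - Gd q 0 s ^ 4 / 4 with hP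
  have hd : ∀ y ∈ Set.Ioo (-(-Real.log q)) (-Real.log q), HasDerivAt P 0 y := by
    intro y hy
    have hy' := abs_lt.2 hy
    have d0 := Gd_deriv hq0 hq1 0 hy'
    have d1 := Gd_deriv hq0 hq1 1 hy'
    have := ((d1.pow 2).sub ((d0.pow 2).const_mul B)).sub ((d0.pow 4).div_const 4)
    refine this.congr_deriv ?_
    norm_num
    rw [hB y hy']
    ring
  have key := isOpen_Ioo.is_const_of_deriv_eq_zero (𝕜 := ℝ) isPreconnected_Ioo
    (fun y hy => (hd y hy).differentiableAt.differentiableWithinAt)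
    (fun y hy => (hd y hy).deriv) (abs_lt.1 hs) (show (0 : ℝ) ∈ Set.Ioo (-(-Real.log q)) (-Real.log q) by
      constructor <;> linarith)
  have z : Gd q 0 0 = 0 := Gd_even_zero 0
  simp only [hP, z] at key
  linear_combination key

lemma Gd_even (hq0 : 0 < q) (hq1 : q < 1) {B : ℝ} (hB : ∀ s : ℝ, |s| < -Real.log q →
    Gd q 2 s = Gd q 0 s ^ 3 / 2 + B * Gd q 0 s) (n : ℕ) : ∀ s : ℝ, |s| < -Real.log q →
    Gd q (2 * n) s = ∑ k ∈ Finset.range (n + 1), cc (Gd q 1 0 ^ 2) B n k * Gd q 0 s ^ (2 * k + 1) ∧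
    Gd q (2 * n + 1) s = ∑ k ∈ Finset.range (n + 1),
      cc (Gd q 1 0 ^ 2) B n k * ((2 * k + 1) * Gd q 0 s ^ (2 * k) * Gd q 1 s) := by
  have step : ∀ n : ℕ, (∀ s : ℝ, |s| < -Real.log q →
    Gd q (2 * n) s = ∑ k ∈ Finset.range (n + 1), cc (Gd q 1 0 ^ 2) B n k * Gd q 0 s ^ (2 * k + 1)) →
    ∀ s : ℝ, |s| < -Real.log q → Gd q (2 * n + 1) s = ∑ k ∈ Finset.range (n + 1),
      cc (Gd q 1 0 ^ 2) B n k * ((2 * k + 1) * Gd q 0 s ^ (2 * k) * Gd q 1 s) := by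
    intro n h s hs
    have h1 := Gd_deriv hq0 hq1 (2 * n) hs
    have d0 := Gd_deriv hq0 hq1 0 hs
    have h2 : HasDerivAt (fun s => ∑ k ∈ Finset.range (n + 1), cc (Gd q 1 0 ^ 2) B n k * Gd q 0 s ^ (2 * k + 1))
        (∑ k ∈ Finset.range (n + 1), cc (Gd q 1 0 ^ 2) B n k * ((2 * k + 1) * Gd q 0 s ^ (2 * k) * Gd q 1 s)) s := by
      apply HasDerivAt.fun_sum
      intro k _
      refine ((d0.pow (2 * k + 1)).const_mul _).congr_deriv ?_
      push_cast
      simp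
    refine h1.unique (h2.congr_of_eventuallyEq ?_)
    filter_upwards [(isOpen_lt continuous_abs continuous_const).mem_nhds hs] with y hy
    exact h y hy
  induction n with
  | zero =>
    have h0 : ∀ s : ℝ, |s| < -Real.log q → Gd q (2 * 0) s =
        ∑ k ∈ Finset.range (0 + 1), cc (Gd q 1 0 ^ 2) B 0 k * Gd q 0 s ^ (2 * k + 1) := by
      intro s hs
      simp [cc, hc]
    exact fun s hs => ⟨h0 s hs, step 0 h0 s hs⟩
  | succ n ih =>
    have h0 : ∀ s : ℝ, |s| < -Real.log q → Gd q (2 * (n + 1)) s =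
        ∑ k ∈ Finset.range (n + 1 + 1), cc (Gd q 1 0 ^ 2) B (n + 1) k * Gd q 0 s ^ (2 * k + 1) := by
      intro s hs
      have h1 := Gd_deriv hq0 hq1 (2 * n + 1) hs
      have d0 := Gd_deriv hq0 hq1 0 hs
      have d1 := Gd_deriv hq0 hq1 1 hs
      have h2 : HasDerivAt (fun s => ∑ k ∈ Finset.range (n + 1), cc (Gd q 1 0 ^ 2) B n k *
            ((2 * k + 1) * Gd q 0 s ^ (2 * k) * Gd q 1 s))
          (∑ k ∈ Finset.range (n + 1), cc (Gd q 1 0 ^ 2) B n k *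
            ((2 * k + 1) * (2 * k * Gd q 0 s ^ (2 * k - 1) * Gd q 1 s) * Gd q 1 s +
              (2 * k + 1) * Gd q 0 s ^ (2 * k) * Gd q 2 s)) s := by
        apply HasDerivAt.fun_sum
        intro k _
        refine ((((d0.pow (2 * k)).const_mul (2 * (k : ℝ) + 1)).mul d1).const_mul _).congr_deriv ?_
        push_cast
        simp
      have h4 : Gd q (2 * n + 1) =ᶠ[nhds s] fun s => ∑ k ∈ Finset.range (n + 1),
          cc (Gd q 1 0 ^ 2) B n k * ((2 * k + 1) * Gd q 0 s ^ (2 * k) * Gd q 1 s) := by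
        filter_upwards [(isOpen_lt continuous_abs continuous_const).mem_nhds hs] with y hy
        exact (ih y hy).2
      have h3 := h1.unique (h2.congr_of_eventuallyEq h4)
      rw [show 2 * (n + 1) = 2 * n + 1 + 1 by ring, h3]
      have i1 := Gd_first hq0 hq1 hB hs
      have i2 := hB s hs
      set x := Gd q 0 s
      set al := Gd q 1 0 ^ 2
      have := hc_poly (fun k => (2 * (k : ℝ) + 1) * (2 * k + 2) / 4) (fun k => (2 * (k : ℝ) + 1) ^ 2 * B)
        (fun k => (2 * (k : ℝ) + 3) * (2 * k + 2) * al) n x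
      have e : ∀ n k, hc (fun k => (2 * (k : ℝ) + 1) * (2 * k + 2) / 4) (fun k => (2 * (k : ℝ) + 1) ^ 2 * B)
        (fun k => (2 * (k : ℝ) + 3) * (2 * k + 2) * al) n k = cc al B n k := fun _ _ => rfl
      simp only [e] at this
      rw [this]
      have t : ∑ k ∈ Finset.range n, (2 * (k : ℝ) + 3) * (2 * k + 2) * al * cc al B n (k + 1) * x ^ (2 * k + 1) =
          ∑ k ∈ Finset.range (n + 1), cc al B n k * ((2 * k + 1) * (2 * k) * al * x ^ (2 * k - 1)) := by
        rw [Finset.sum_range_succ']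
        simp only [Nat.cast_zero, mul_zero, zero_mul, add_zero]
        apply Finset.sum_congr rfl
        intro k _
        rw [show 2 * (k + 1) - 1 = 2 * k + 1 by omega]
        push_cast
        ring
      rw [t, ← Finset.sum_add_distrib]
      apply Finset.sum_congr rfl
      intro k _
      rw [← mul_add]
      congr 1
      rcases k with _ | k
      · simp
        rw [i2]
        ring
      · rw [show 2 * (k + 1) - 1 = 2 * k + 1 by omega]
        push_cast
        rw [i2]
        linear_combination ((2 * ((k : ℝ) + 1) + 1) * (2 * (k + 1)) * x ^ (2 * k + 1)) * i1
    exact fun s hs => ⟨h0 s hs, step (n + 1) h0 s hs⟩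

lemma Gd_odd_zero (n : ℕ) : Gd q (2 * n + 1) 0 = (-1) ^ n * tangentNum (n + 1) +
    4 * ∑' k : ℕ, q ^ (k + 1) * ((k : ℝ) + 1) ^ (2 * n + 1) / (1 + (-q) ^ (k + 1)) := by
  unfold Gd
  rw [tau_val, neg_zero, pow_succ (-1 : ℝ) (2 * n), pow_mul]
  have : EE (cq q) (2 * n + 1) 0 =
      ∑' k : ℕ, q ^ (k + 1) * ((k : ℝ) + 1) ^ (2 * n + 1) / (1 + (-q) ^ (k + 1)) := by
    unfold EE cq
    apply tsum_congr
    intro k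
    rw [mul_zero, Real.exp_zero]
    ring
  rw [this]
  norm_num
  ring

lemma milne_aux (hq0 : 0 < q) (hq1 : q < 1) : ∃ B : ℝ, ∀ n : ℕ,
    tangentNum (n + 1) + 4 * (-1 : ℝ) ^ n *
      ∑' k : ℕ, q ^ (k + 1) * ((k : ℝ) + 1) ^ (2 * n + 1) / (1 + (-q) ^ (k + 1)) =
    (-1) ^ n * (sqGen q ^ 4 / 2 * cc ((sqGen q ^ 4 / 2) ^ 2) B n 0) := by
  obtain ⟨B, hB⟩ := G_ode hq0 hq1
  have hL : 0 < -Real.log q := by have := Real.log_neg hq0 hq1; linarith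
  have z : Gd q 0 0 = 0 := Gd_even_zero 0
  have g1 : Gd q 1 0 = sqGen q ^ 4 / 2 := by
    have h := Gd_odd_zero (q := q) 0
    have t : tangentNum (0 + 1) = 1 / 2 := by
      unfold tangentNum
      norm_num [bernoulli_two]
    have f := four_squares hq0 hq1
    have e : ∑' k : ℕ, q ^ (k + 1) * ((k : ℝ) + 1) ^ (2 * 0 + 1) / (1 + (-q) ^ (k + 1)) =
        ∑' k : ℕ, ((k : ℝ) + 1) * (q ^ (k + 1) / (1 + (-q) ^ (k + 1))) := by
      apply tsum_congr
      intro k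
      ring
    rw [t, e] at h
    simp only [mul_zero, zero_add] at h
    rw [h, f]
    ring
  refine ⟨B, fun n => ?_⟩
  have h := (Gd_even hq0 hq1 hB n 0 (by simpa using hL)).2
  rw [Finset.sum_range_succ', Gd_odd_zero, z, g1] at h
  rw [Finset.sum_eq_zero (fun k _ => by simp)] at h
  norm_num at h
  have : ((-1 : ℝ) ^ n) ^ 2 = 1 := by rw [← pow_mul, mul_comm, pow_mul]; simp
  linear_combination (-1) ^ n * h - tangentNum (n + 1) * this

end

/-- Milne's `4m²` squares formula in Hankel determinant form:
`□(q)^{4m²} = (2^{m(2m−1)} / Π_{i=1}^{2m−1} i!) ·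
  det( t_{i+j−1} + 4(−1)^{i+j} Σ_{k≥1} q^k k^{2i+2j−3}/(1+(−q)^k) )_{1≤i,j≤m}`. -/
theorem milne_hankel_4m2 (q : ℝ) (hq0 : 0 < q) (hq1 : q < 1) (m : ℕ) (hm : 1 ≤ m) :
    sqGen q ^ (4 * m ^ 2) =
      ((2 : ℝ) ^ (m * (2 * m - 1)) / ∏ i ∈ Finset.Icc 1 (2 * m - 1), (Nat.factorial i : ℝ)) *
        Matrix.det (Matrix.of fun i j : Fin m =>
          tangentNum ((i : ℕ) + (j : ℕ) + 1) +
            4 * (-1 : ℝ) ^ ((i : ℕ) + (j : ℕ)) *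
              ∑' k : ℕ, q ^ (k + 1) * ((k : ℝ) + 1) ^ (2 * (i : ℕ) + 2 * (j : ℕ) + 1) /
                (1 + (-q) ^ (k + 1))) := by
  obtain ⟨B, hB⟩ := milne_aux hq0 hq1
  rw [hankel_final (sqGen q) B m _ hB]
  simp only [mul_add]
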